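/- arXiv:2411.12684 — 2 statements merged into one kernel-verified Lean document; each statement's English description precedes it below -/
import Mathlib

section
/- Let n ≥ 2 be a natural number and let U ⊆ (ℝ/ℤ)^n be a 2-dimensional proper subtorus. Then there exist N ∈ ℤ_{≥0} and positive rational numbers α₁,…,α_N, β₁,…,β_N such that the set 𝒮₁(U) has finite symmetric difference with the set ⋃_{i=1}^N { D(U) + 1/(αᵢ·s + βᵢ) : s ∈ ℤ, s ≥ 0 }. -/
noncomputable section

abbrev Torus (n : ℕ) : Type := Fin n → AddCircle (1 : ℝ)

def torusProj {n : ℕ} (x : Fin n → ℝ) : Torus n := fun i => (x i : AddCircle (1 : ℝ))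

def spanTorus {n k : ℕ} (v : Fin k → Fin n → ℤ) : Set (Torus n) :=
  {p | ∃ t : Fin k → ℝ, p = torusProj fun i => ∑ j, t j * (v j i : ℝ)}

def IsSubtorus {n : ℕ} (k : ℕ) (S : Set (Torus n)) : Prop :=
  ∃ v : Fin k → Fin n → ℤ,
    LinearIndependent ℝ (fun j : Fin k => fun i : Fin n => (v j i : ℝ)) ∧ S = spanTorus v

def IsProperSub {n : ℕ} (S : Set (Torus n)) : Prop :=
  ¬ S ⊆ ⋃ i : Fin n, {x : Torus n | x i = 0}

def DVal {n : ℕ} (S : Set (Torus n)) : ℝ :=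
  sInf ((fun x : Torus n => ⨆ i, dist (x i) ((1 / 2 : ℝ) : AddCircle (1 : ℝ))) '' S)

def relSpec1 {n : ℕ} (U : Set (Torus n)) : Set ℝ :=
  {d | ∃ T : Set (Torus n), IsSubtorus 1 T ∧ IsProperSub T ∧ T ⊆ U ∧ d = DVal T}

def Spec (k n : ℕ) : Set ℝ :=
  {d | ∃ T : Set (Torus n), IsSubtorus k T ∧ IsProperSub T ∧ d = DVal T}

def progSet (d : ℝ) (α β : ℚ) : Set ℝ :=
  {x | ∃ s : ℕ, x = d + 1 / ((α : ℝ) * s + (β : ℝ))}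

lemma sieve_count (S : Finset ℕ) : (∀ p ∈ S, p.Prime) → ∀ (r : ℕ → ℕ) (N : ℕ),
    |(((Finset.range N).filter (fun s => ∀ p ∈ S, ¬ s ≡ r p [MOD p])).card : ℝ)
      - N * ∏ p ∈ S, (1 - 1 / (p : ℝ))| ≤ 2 ^ S.card - 1 := by
  classical
  induction S using Finset.induction_on with
  | empty => intro _ r N; simp
  | insert p0 S hp0 ih =>
    intro hS r N
    have hS' : ∀ p ∈ S, p.Prime := fun p hp => hS p (Finset.mem_insert_of_mem hp)
    have hpp : p0.Prime := hS p0 (Finset.mem_insert_self _ _)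
    have hpos : 0 < p0 := hpp.pos
    set ρ := r p0 % p0 with hρ
    have hρlt : ρ < p0 := Nat.mod_lt _ hpos
    have hr' : ∀ p, ∃ j0, p ∈ S → ∀ j, (ρ + p0 * j ≡ r p [MOD p] ↔ j ≡ j0 [MOD p]) := by
      intro p
      by_cases hp : p ∈ S
      · have hco : Nat.Coprime p0 p := by
          rw [Nat.coprime_primes hpp (hS' p hp)]
          rintro rfl; exact hp0 hp
        obtain ⟨x, hx1, hx2⟩ := Nat.chineseRemainder hco ρ (r p)
        have hx : x = ρ + p0 * (x / p0) := by
          have h1 : x % p0 = ρ := by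
            have := hx1; unfold Nat.ModEq at this
            rwa [Nat.mod_eq_of_lt hρlt] at this
          have := Nat.mod_add_div x p0
          omega
        refine ⟨x / p0, fun _ j => ?_⟩
        constructor
        · intro h
          have h2 : ρ + p0 * j ≡ ρ + p0 * (x / p0) [MOD p] := by
            rw [← hx]; exact h.trans hx2.symm
          have h3 := Nat.ModEq.add_left_cancel' ρ h2
          exact Nat.ModEq.cancel_left_of_coprime (by simpa [Nat.coprime_comm] using hco.symm) h3
        · intro h
          have h2 : ρ + p0 * j ≡ ρ + p0 * (x / p0) [MOD p] :=
            Nat.ModEq.add_left _ (Nat.ModEq.mul_left _ h)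
          rw [← hx] at h2
          exact h2.trans hx2
      · exact ⟨0, fun h => absurd h hp⟩
    choose r' hr' using hr'
    set N' := (N + p0 - 1 - ρ) / p0 with hN'
    have hN1 : p0 * N' ≤ N + p0 - 1 - ρ := Nat.mul_div_le _ _
    have hN2 : N + p0 - 1 - ρ < p0 * (N' + 1) := Nat.lt_mul_div_succ _ hpos
    have hjN : ∀ j, j < N' ↔ ρ + p0 * j < N := by
      intro j
      constructor
      · intro h
        have : p0 * (j + 1) ≤ p0 * N' := Nat.mul_le_mul_left _ h
        rw [mul_add] at this
        omega
      · intro h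
        by_contra hc
        have : p0 * N' ≤ p0 * j := Nat.mul_le_mul_left _ (not_lt.mp hc)
        rw [mul_add] at hN2
        omega
    have hcard : ((Finset.range N).filter
          (fun s => ∀ p ∈ insert p0 S, ¬ s ≡ r p [MOD p])).card
        + ((Finset.range N').filter (fun s => ∀ p ∈ S, ¬ s ≡ r' p [MOD p])).card
        = ((Finset.range N).filter (fun s => ∀ p ∈ S, ¬ s ≡ r p [MOD p])).card := by
      have hB : ((Finset.range N').filter (fun s => ∀ p ∈ S, ¬ s ≡ r' p [MOD p])).card
          = ((Finset.range N).filter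
            (fun s => (∀ p ∈ S, ¬ s ≡ r p [MOD p]) ∧ s ≡ r p0 [MOD p0])).card := by
        apply Finset.card_bij (fun j _ => ρ + p0 * j)
        · intro j hj
          simp only [Finset.mem_filter, Finset.mem_range] at hj ⊢
          refine ⟨(hjN j).1 hj.1, fun p hp h => hj.2 p hp ((hr' p hp j).1 h), ?_⟩
          unfold Nat.ModEq
          simp [hρ]
        · intro a _ b _ hab
          have : p0 * a = p0 * b := by simpa using hab
          exact Nat.eq_of_mul_eq_mul_left hpos this
        · intro s hs
          simp only [Finset.mem_filter, Finset.mem_range] at hs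
          have hsx : ρ + p0 * (s / p0) = s := by
            have h1 := hs.2.2
            unfold Nat.ModEq at h1
            have := Nat.mod_add_div s p0
            omega
          refine ⟨s / p0, ?_, hsx⟩
          simp only [Finset.mem_filter, Finset.mem_range]
          refine ⟨(hjN _).2 (by rw [hsx]; exact hs.1), fun p hp h => hs.2.1 p hp ?_⟩
          have := (hr' p hp (s / p0)).2 h
          rwa [hsx] at this
      rw [hB, ← Finset.card_filter_add_card_filter_not
        (s := (Finset.range N).filter (fun s => ∀ p ∈ S, ¬ s ≡ r p [MOD p]))
        (fun s => s ≡ r p0 [MOD p0]), Finset.filter_filter, Finset.filter_filter, add_comm]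
      congr 2
      ext s
      simp only [Finset.mem_filter, Finset.mem_insert, forall_eq_or_imp]
      tauto
    have h1 := ih hS' r N
    have h2 := ih hS' r' N'
    rw [Finset.prod_insert hp0, Finset.card_insert_of_notMem hp0]
    set X := ∏ p ∈ S, (1 - 1 / (p : ℝ)) with hX
    have hX0 : 0 ≤ X := Finset.prod_nonneg (fun p hp => by
      have : (1 : ℝ) ≤ p := by exact_mod_cast (hS' p hp).one_lt.le
      rw [sub_nonneg, div_le_one (by linarith)]; exact this)
    have hX1 : X ≤ 1 := Finset.prod_le_one (fun p hp => by
      have : (1 : ℝ) ≤ p := by exact_mod_cast (hS' p hp).one_lt.le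
      rw [sub_nonneg, div_le_one (by linarith)]; exact this) (fun p hp => by
        have : (0 : ℝ) ≤ 1 / p := by positivity
        linarith)
    have hcR := congrArg (Nat.cast : ℕ → ℝ) hcard
    push_cast at hcR
    have hpR : (0 : ℝ) < p0 := by exact_mod_cast hpos
    have hd : |(N' : ℝ) - N * (1 / (p0 : ℝ))| ≤ 1 := by
      have e1 : (p0 : ℝ) * N' ≤ N + p0 := by
        exact_mod_cast (show p0 * N' ≤ N + p0 by omega)
      have e2 : (N : ℝ) ≤ p0 * N' + p0 := by
        exact_mod_cast (show N ≤ p0 * N' + p0 by rw [mul_add] at hN2; omega)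
      have e3 : (N' : ℝ) - N * (1 / (p0 : ℝ)) = (p0 * N' - N) / p0 := by field_simp
      rw [e3, abs_le]
      constructor
      · rw [le_div_iff₀ hpR]; linarith
      · rw [div_le_iff₀ hpR]; linarith
    have hd2 : |((N' : ℝ) - N * (1 / (p0 : ℝ))) * X| ≤ 1 := by
      rw [abs_mul, abs_of_nonneg hX0]
      calc _ ≤ 1 * 1 := mul_le_mul hd hX1 hX0 (by norm_num)
        _ = 1 := by norm_num
    rw [abs_le] at h1 h2 hd2 ⊢
    rw [pow_succ]
    constructor <;> nlinarith [h1.1, h1.2, h2.1, h2.2, hd2.1, hd2.2]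

lemma sieve_exists (S : Finset ℕ) (hS : ∀ p ∈ S, p.Prime) (r : ℕ → ℕ) (N : ℕ)
    (hN : 4 ^ S.card ≤ N) : ∃ s < N, ∀ p ∈ S, ¬ s ≡ r p [MOD p] := by
  classical
  by_contra hcon
  push Not at hcon
  have h := sieve_count S hS r N
  have h0 : (Finset.range N).filter (fun s => ∀ p ∈ S, ¬ s ≡ r p [MOD p]) = ∅ := by
    apply Finset.filter_eq_empty_iff.2
    intro s hs
    have := hcon s (Finset.mem_range.1 hs)
    push Not
    exact this
  rw [h0] at h
  have hX : (1 / 2 : ℝ) ^ S.card ≤ ∏ p ∈ S, (1 - 1 / (p : ℝ)) := by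
    rw [← Finset.prod_const]
    apply Finset.prod_le_prod
    · intros; norm_num
    · intro p hp
      have : (2 : ℝ) ≤ p := by exact_mod_cast (hS p hp).two_le
      have h2 : 1 / (p : ℝ) ≤ 1 / 2 := one_div_le_one_div_of_le (by norm_num) this
      linarith
  have hNR : (4 : ℝ) ^ S.card ≤ N := by exact_mod_cast hN
  have h3 : (4 : ℝ) ^ S.card * (1 / 2) ^ S.card ≤ N * ∏ p ∈ S, (1 - 1 / (p : ℝ)) :=
    mul_le_mul hNR hX (by positivity) (by positivity)
  rw [← mul_pow] at h3
  rw [abs_le] at h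
  have h4 : ((4 : ℝ) * (1 / 2)) = 2 := by norm_num
  rw [h4] at h3
  have h5 := h.1
  simp only [Finset.card_empty, Nat.cast_zero] at h5
  linarith

lemma omega_bound (v : ℕ) (hv : v ≠ 0) : (4 ^ v.primeFactors.card) ^ 2 ≤ 16 ^ 16 * v := by
  classical
  have h1 : (4 ^ v.primeFactors.card) ^ 2 = ∏ p ∈ v.primeFactors, 16 := by
    rw [Finset.prod_const, ← pow_mul, mul_comm, pow_mul]
    norm_num
  rw [h1, ← Finset.prod_filter_mul_prod_filter_not v.primeFactors (fun p => p < 16)]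
  apply Nat.mul_le_mul
  · rw [Finset.prod_const]
    apply Nat.pow_le_pow_right (by norm_num)
    calc _ ≤ (Finset.range 16).card := Finset.card_le_card (by
            intro p hp; simp only [Finset.mem_filter] at hp; simpa using hp.2)
      _ = 16 := by simp
  · calc _ ≤ ∏ p ∈ v.primeFactors with ¬ p < 16, p := by
          apply Finset.prod_le_prod'
          intro p hp
          simp only [Finset.mem_filter, not_lt] at hp
          exact hp.2
      _ ≤ ∏ p ∈ v.primeFactors, p := by
          apply Finset.prod_le_prod_of_subset_of_one_le' (Finset.filter_subset _ _)
          intro p hp _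
          exact (Nat.prime_of_mem_primeFactors hp).one_lt.le
      _ ≤ v := Nat.le_of_dvd (Nat.pos_of_ne_zero hv) (Nat.prod_primeFactors_dvd v)

/-- for every `c`, eventually `c * 4 ^ ω(v) + c ≤ v`. -/
lemma omega_small (c : ℕ) : ∃ v0, ∀ v ≥ v0, c * 4 ^ v.primeFactors.card + c ≤ v := by
  refine ⟨(2 * c) ^ 2 * 16 ^ 16 + 1, fun v hv => ?_⟩
  have h := omega_bound v (by rintro rfl; exact absurd hv (Nat.not_succ_le_zero _))
  set X := 4 ^ v.primeFactors.card with hX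
  have hX1 : 1 ≤ X := Nat.one_le_pow _ _ (by norm_num)
  have h2 : (2 * c * X) ^ 2 ≤ v ^ 2 := by
    calc (2 * c * X) ^ 2 = (2 * c) ^ 2 * X ^ 2 := by ring
      _ ≤ (2 * c) ^ 2 * (16 ^ 16 * v) := Nat.mul_le_mul_left _ h
      _ = ((2 * c) ^ 2 * 16 ^ 16) * v := by ring
      _ ≤ v * v := Nat.mul_le_mul_right _ (Nat.le_of_succ_le hv)
      _ = v ^ 2 := by ring
  have h3 : 2 * c * X ≤ v := (Nat.pow_le_pow_iff_left (by norm_num)).1 h2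
  have h4 : c * 1 ≤ c * X := Nat.mul_le_mul_left _ hX1
  have : 2 * c * X = c * X + c * X := by ring
  omega

open Pointwise in
lemma decomp (a : Fin 2 → ℕ) (t : Finset (Fin 2 → ℕ)) (u1 u2 : ℤ) (N : ℕ)
    (hNa : u1 * a 0 + u2 * a 1 ≤ N) (hNt : ∀ p ∈ t, u1 * p 0 + u2 * p 1 ≤ N)
    (w : Fin 2 → ℕ) (hw : w ∈ a +ᵥ (AddSubmonoid.closure (t : Set (Fin 2 → ℕ)) : Set (Fin 2 → ℕ)))
    (hv : (N : ℤ) < u1 * w 0 + u2 * w 1) :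
    ∃ p ∈ t, ∃ w0 ∈ a +ᵥ (AddSubmonoid.closure (t : Set (Fin 2 → ℕ)) : Set (Fin 2 → ℕ)), ∃ k : ℕ,
      w = w0 + k • p ∧ 0 < u1 * p 0 + u2 * p 1 ∧
      u1 * w 0 + u2 * w 1 ≤ N + t.card * (k * N) := by
  classical
  obtain ⟨b, hb, rfl⟩ := hw
  have hb' : b ∈ AddSubmonoid.closure (t : Set (Fin 2 → ℕ)) := hb
  rw [AddSubmonoid.mem_closure_finset] at hb'
  obtain ⟨f, -, hf⟩ := hb'
  have hsum : u1 * b 0 + u2 * b 1 = ∑ p ∈ t, (f p : ℤ) * (u1 * p 0 + u2 * p 1) := by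
    rw [← hf]
    simp only [Finset.sum_apply, Pi.smul_apply, smul_eq_mul]
    push_cast
    rw [Finset.mul_sum, Finset.mul_sum, ← Finset.sum_add_distrib]
    apply Finset.sum_congr rfl
    intros; ring
  have hadd : ∀ i, ((a +ᵥ b) i : ℤ) = a i + b i := by intro i; simp [vadd_eq_add]
  have hXpos : 0 < u1 * b 0 + u2 * b 1 := by
    simp only [hadd] at hv; linarith
  have htne : t.Nonempty := by
    by_contra h
    rw [Finset.not_nonempty_iff_eq_empty] at h
    subst h
    simp at hsum; omega
  obtain ⟨p, hp, hle⟩ := Finset.exists_le_of_sum_le (s := t)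
    (f := fun _ => u1 * (b 0 : ℤ) + u2 * b 1)
    (g := fun p => (t.card : ℤ) * ((f p : ℤ) * (u1 * p 0 + u2 * p 1))) htne (by
      rw [← Finset.mul_sum, ← hsum]; simp)
  have hup : 0 < u1 * (p 0 : ℤ) + u2 * p 1 := by
    by_contra hc
    have h1 : (f p : ℤ) * (u1 * p 0 + u2 * p 1) ≤ 0 :=
      mul_nonpos_of_nonneg_of_nonpos (by positivity) (not_lt.1 hc)
    have h2 : (t.card : ℤ) * ((f p : ℤ) * (u1 * p 0 + u2 * p 1)) ≤ 0 :=
      mul_nonpos_of_nonneg_of_nonpos (by positivity) h1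
    omega
  refine ⟨p, hp, a +ᵥ ∑ q ∈ t.erase p, f q • q, ?_, f p, ?_, hup, ?_⟩
  · refine ⟨_, ?_, rfl⟩
    apply AddSubmonoid.sum_mem
    intro q hq
    apply AddSubmonoid.nsmul_mem
    exact AddSubmonoid.subset_closure (Finset.mem_of_mem_erase hq)
  · show a +ᵥ b = _
    rw [← hf, ← Finset.sum_erase_add _ _ hp]
    simp only [vadd_eq_add, add_assoc]
  · show u1 * ((a +ᵥ b) 0 : ℤ) + u2 * ((a +ᵥ b) 1 : ℤ) ≤ _
    simp only [hadd]
    have h1 : (f p : ℤ) * (u1 * p 0 + u2 * p 1) ≤ f p * N :=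
      mul_le_mul_of_nonneg_left (hNt p hp) (by positivity)
    have h2 : (t.card : ℤ) * ((f p : ℤ) * (u1 * p 0 + u2 * p 1)) ≤ t.card * (f p * N) :=
      mul_le_mul_of_nonneg_left h1 (by positivity)
    linarith

lemma coprime_of_forall (m n : ℕ) (h : ∀ p : ℕ, p.Prime → (p : ℤ) ∣ m → (p : ℤ) ∣ n → False) :
    Nat.Coprime m n := by
  by_contra hc
  rw [Nat.Prime.not_coprime_iff_dvd] at hc
  obtain ⟨p, hp, h1, h2⟩ := hc
  exact h p hp (by exact_mod_cast h1) (by exact_mod_cast h2)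

lemma not_coprime_dvd {m n p : ℕ} (h : Nat.Coprime m n) (hp : p.Prime)
    (h1 : (p : ℤ) ∣ m) (h2 : (p : ℤ) ∣ n) : False :=
  (Nat.Prime.not_coprime_iff_dvd.2 ⟨p, hp, by exact_mod_cast h1, by exact_mod_cast h2⟩) h

open Pointwise in
theorem linear_EP (a : Fin 2 → ℕ) (t : Finset (Fin 2 → ℕ)) (u1 u2 : ℤ) :
    ∃ P > 0, ∃ v0, ∀ v ≥ v0,
    (∃ w ∈ a +ᵥ (AddSubmonoid.closure (t : Set (Fin 2 → ℕ)) : Set (Fin 2 → ℕ)),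
      Nat.Coprime (w 0) (w 1) ∧ ((v : ℕ) : ℤ) = u1 * w 0 + u2 * w 1) →
    (∃ w ∈ a +ᵥ (AddSubmonoid.closure (t : Set (Fin 2 → ℕ)) : Set (Fin 2 → ℕ)),
      Nat.Coprime (w 0) (w 1) ∧ ((v + P : ℕ) : ℤ) = u1 * w 0 + u2 * w 1) := by
  classical
  set W := a +ᵥ (AddSubmonoid.closure (t : Set (Fin 2 → ℕ)) : Set (Fin 2 → ℕ)) with hW
  let u : (Fin 2 → ℕ) → ℤ := fun p => u1 * p 0 + u2 * p 1
  let det : (Fin 2 → ℕ) → (Fin 2 → ℕ) → ℤ := fun p q => p 0 * q 1 - p 1 * q 0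
  let κ : ℤ := (Int.gcd u1 u2 : ℤ)
  let N : ℕ := 1 + (u a).natAbs + t.sup (fun p => (u p).natAbs)
    + (t ×ˢ t).sup (fun x => (det x.1 x.2 * κ).natAbs) + t.sup (fun p => (det a p).natAbs)
  have hN1 : 1 ≤ N := by simp only [N]; omega
  have hNa : u a ≤ N := by simp only [N]; omega
  have hNt : ∀ p ∈ t, (u p).natAbs ≤ N := fun p hp => by
    have := Finset.le_sup (f := fun p => (u p).natAbs) hp
    simp only [N]; omega
  have hNpq : ∀ p ∈ t, ∀ q ∈ t, (det p q * κ).natAbs ≤ N := fun p hp q hq => by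
    have := Finset.le_sup (f := fun x : (Fin 2 → ℕ) × (Fin 2 → ℕ) => (det x.1 x.2 * κ).natAbs)
      (Finset.mk_mem_product hp hq)
    simp only [N]; simp only at this; omega
  have hNap : ∀ p ∈ t, (det a p).natAbs ≤ N := fun p hp => by
    have := Finset.le_sup (f := fun p => (det a p).natAbs) hp
    simp only [N]; omega
  have hfac : ∀ z : ℤ, z ≠ 0 → z.natAbs ≤ N → z ∣ (N.factorial : ℤ) := by
    intro z hz hzN
    rw [← Int.natAbs_dvd]
    exact_mod_cast Nat.dvd_factorial (Int.natAbs_pos.2 hz) hzN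
  have hadd : ∀ w ∈ W, ∀ b ∈ AddSubmonoid.closure (t : Set (Fin 2 → ℕ)), w + b ∈ W := by
    rintro w ⟨c, hc, rfl⟩ b hb
    exact ⟨c + b, AddSubmonoid.add_mem _ hc hb, by simp [vadd_eq_add, add_assoc]⟩
  set P := N.factorial * N.factorial with hP
  have hPpos : 0 < P := Nat.mul_pos N.factorial_pos N.factorial_pos
  set c := N + P + t.card * N * N with hc
  obtain ⟨v0, hv0⟩ := omega_small c
  refine ⟨P, hPpos, v0 + N + 1, ?_⟩
  rintro v hv ⟨w, hwW, hcop, hvw⟩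
  obtain ⟨p, hp, w0, hw0, k, hwk, hup, hle⟩ := decomp a t u1 u2 N hNa
    (fun p hp => by have := hNt p hp; simp only [u] at this; omega) w hwW (by rw [← hvw]; omega)
  have hup' : 0 < u p := hup
  -- the step `h`
  obtain ⟨h, hh1, hh2⟩ : ∃ h : ℕ, (N.factorial : ℤ) ∣ (h : ℤ) ∧ (h : ℤ) * u p = P := by
    obtain ⟨e, he⟩ := hfac (u p) hup'.ne' (hNt p hp)
    have hepos : 0 < e := by
      have : (0 : ℤ) < N.factorial := by exact_mod_cast N.factorial_pos
      rw [he] at this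
      exact (mul_pos_iff_of_pos_left hup').1 this
    refine ⟨N.factorial * e.toNat, ?_, ?_⟩
    · push_cast; exact Dvd.intro _ rfl
    · push_cast
      rw [Int.toNat_of_nonneg hepos.le, hP]
      push_cast
      linear_combination (-(N.factorial : ℤ)) * he
  have hpc : p ∈ AddSubmonoid.closure (t : Set (Fin 2 → ℕ)) := AddSubmonoid.subset_closure hp
  by_cases hq : ∃ q ∈ t, det p q ≠ 0
  · obtain ⟨q, hq, hdet⟩ := hq
    have hqc : q ∈ AddSubmonoid.closure (t : Set (Fin 2 → ℕ)) := AddSubmonoid.subset_closure hq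
    set δ := det p q with hδ
    have hu0 : ¬ (u1 = 0 ∧ u2 = 0) := by
      rintro ⟨h1, h2⟩; rw [h1, h2] at hup; simp at hup
    have hκ : κ ≠ 0 := by
      simp only [κ]
      intro h0
      have : Int.gcd u1 u2 = 0 := by exact_mod_cast h0
      exact hu0 (Int.gcd_eq_zero_iff.1 this)
    have hδκ : δ * κ ∣ (h : ℤ) :=
      (hfac _ (mul_ne_zero hdet hκ) (hNpq p hp q hq)).trans hh1
    let V := v + P
    let z0 : ℤ := -δ * u2
    let z1 : ℤ := δ * u1
    let f0 : ℕ → ℤ := fun s => w 0 + h * p 0 + s * z0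
    let f1 : ℕ → ℤ := fun s => w 1 + h * p 1 + s * z1
    let S := V.primeFactors.filter (fun π : ℕ => ¬ (π : ℤ) ∣ δ * κ)
    let r : ℕ → ℕ := fun π => if hb : ∃ s, (π : ℤ) ∣ f0 s ∧ (π : ℤ) ∣ f1 s then hb.choose else 0
    have hScard : S.card ≤ V.primeFactors.card := by
      simp only [S]; exact Finset.card_filter_le V.primeFactors _
    have hbig : 4 ^ S.card ≤ k / N + 1 := by
      have h1 : 4 ^ S.card ≤ 4 ^ V.primeFactors.card := Nat.pow_le_pow_right (by norm_num) hScard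
      refine h1.trans ?_
      have h2 := hv0 V (by simp only [V]; omega)
      set X := 4 ^ V.primeFactors.card
      by_contra hcon
      push Not at hcon
      have hkX : k ≤ X * N := by
        have := Nat.lt_mul_div_succ k (show 0 < N by omega)
        calc k ≤ N * (k / N + 1) := this.le
          _ ≤ N * X := Nat.mul_le_mul_left _ hcon.le
          _ = X * N := mul_comm _ _
      have h3 : v ≤ N + t.card * (k * N) := by
        rw [← hvw] at hle
        exact_mod_cast hle
      have h4 : t.card * (k * N) ≤ t.card * (X * N * N) :=
        Nat.mul_le_mul_left _ (Nat.mul_le_mul_right _ hkX)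
      have h5 : t.card * (X * N * N) ≤ c * X := by
        calc t.card * (X * N * N) = (t.card * N * N) * X := by ring
          _ ≤ c * X := Nat.mul_le_mul_right _ (by omega)
      have h6 : N + P ≤ c := by omega
      have : V = v + P := rfl
      have h7 : V = c * X + c := by omega
      have hX1 : c * X < c * X + 1 := by omega
      -- strictness
      have h8 : k < X * N := by
        have := Nat.lt_mul_div_succ k (show 0 < N by omega)
        calc k < N * (k / N + 1) := this
          _ ≤ N * X := Nat.mul_le_mul_left _ hcon.le
          _ = X * N := mul_comm _ _
      have htc : 0 < t.card := Finset.card_pos.2 ⟨p, hp⟩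
      have h9 : t.card * (k * N) < t.card * (X * N * N) :=
        Nat.mul_lt_mul_of_pos_left (Nat.mul_lt_mul_of_pos_right h8 (by omega)) htc
      omega
    obtain ⟨s, hs, hsS⟩ := sieve_exists S
      (fun π hπ => Nat.prime_of_mem_primeFactors (Finset.mem_filter.1 hπ).1) r _ hbig
    have hsN : (s : ℤ) * N ≤ k := by
      have h1 : s * N ≤ (k / N) * N := Nat.mul_le_mul_right _ (by omega)
      have h2 : (k / N) * N ≤ k := Nat.div_mul_le_self _ _
      exact_mod_cast h1.trans h2
    have hsq : (s : ℤ) * u q ≤ k := by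
      have h1 : u q ≤ N := by have := hNt q hq; omega
      have := mul_le_mul_of_nonneg_left h1 (show (0 : ℤ) ≤ s by positivity)
      linarith
    have hcoef : (0 : ℤ) ≤ k + h - s * u q := by
      have : (0 : ℤ) ≤ h := by positivity
      linarith
    let w' : Fin 2 → ℕ := w0 + ((k + h - s * u q : ℤ).toNat • p + (s * (u p).toNat) • q)
    have hw'0 : ∀ i, (w' i : ℤ) = w i + h * p i + s * (u p * q i - u q * p i) := by
      intro i
      rw [hwk]
      simp only [w', Pi.add_apply, Pi.smul_apply, smul_eq_mul]
      push_cast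
      rw [Int.toNat_of_nonneg hcoef, Int.toNat_of_nonneg hup'.le]
      ring
    have hz0 : u p * q 0 - u q * p 0 = z0 := by simp only [u, z0, hδ, det]; ring
    have hz1 : u p * q 1 - u q * p 1 = z1 := by simp only [u, z1, hδ, det]; ring
    have e0 : (w' 0 : ℤ) = f0 s := by rw [hw'0 0, hz0]
    have e1 : (w' 1 : ℤ) = f1 s := by rw [hw'0 1, hz1]
    have hVw : ((v + P : ℕ) : ℤ) = u1 * w' 0 + u2 * w' 1 := by
      rw [e0, e1]
      push_cast
      rw [← hh2, hvw]
      simp only [f0, f1, z0, z1, u]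
      ring
    refine ⟨w', hadd w0 hw0 _ (AddSubmonoid.add_mem _ (AddSubmonoid.nsmul_mem _ hpc _)
      (AddSubmonoid.nsmul_mem _ hqc _)), ?_, hVw⟩
    apply coprime_of_forall
    intro π hπ hd0 hd1
    have hπV : π ∈ V.primeFactors := by
      rw [Nat.mem_primeFactors]
      refine ⟨hπ, ?_, by simp only [V]; omega⟩
      have : (π : ℤ) ∣ ((v + P : ℕ) : ℤ) := by
        rw [hVw]; exact dvd_add (hd0.mul_left _) (hd1.mul_left _)
      exact_mod_cast this
    rw [e0] at hd0
    rw [e1] at hd1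
    by_cases hπδ : (π : ℤ) ∣ δ * κ
    · have hz0d : (π : ℤ) ∣ z0 := by
        refine hπδ.trans ?_
        simp only [z0, neg_mul]
        exact (dvd_neg).2 (mul_dvd_mul_left _ (Int.gcd_dvd_right _ _))
      have hz1d : (π : ℤ) ∣ z1 := by
        refine hπδ.trans ?_
        exact mul_dvd_mul_left _ (Int.gcd_dvd_left _ _)
      have hhd : (π : ℤ) ∣ h := hπδ.trans hδκ
      apply not_coprime_dvd hcop hπ
      · have h1 : (w 0 : ℤ) = f0 s - h * p 0 - s * z0 := by simp only [f0]; ring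
        rw [h1]
        exact dvd_sub (dvd_sub hd0 (hhd.mul_right _)) (hz0d.mul_left _)
      · have h1 : (w 1 : ℤ) = f1 s - h * p 1 - s * z1 := by simp only [f1]; ring
        rw [h1]
        exact dvd_sub (dvd_sub hd1 (hhd.mul_right _)) (hz1d.mul_left _)
    · have hπS : π ∈ S := Finset.mem_filter.2 ⟨hπV, hπδ⟩
      have hex : ∃ s, (π : ℤ) ∣ f0 s ∧ (π : ℤ) ∣ f1 s := ⟨s, hd0, hd1⟩
      have hr : r π = hex.choose := by simp only [r]; rw [dif_pos hex]
      obtain ⟨hr0, hr1⟩ := hex.choose_spec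
      rw [← hr] at hr0 hr1
      apply hsS π hπS
      have hπ' : Prime (π : ℤ) := Nat.prime_iff_prime_int.1 hπ
      have g0 : (π : ℤ) ∣ ((r π : ℤ) - s) * z0 := by
        have := dvd_sub hr0 hd0
        have h1 : f0 (r π) - f0 s = ((r π : ℤ) - s) * z0 := by simp only [f0]; ring
        rwa [h1] at this
      have g1 : (π : ℤ) ∣ ((r π : ℤ) - s) * z1 := by
        have := dvd_sub hr1 hd1
        have h1 : f1 (r π) - f1 s = ((r π : ℤ) - s) * z1 := by simp only [f1]; ring
        rwa [h1] at this
      rw [Nat.modEq_iff_dvd]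
      by_contra hnd
      have k0 := (hπ'.dvd_or_dvd g0).resolve_left hnd
      have k1 := (hπ'.dvd_or_dvd g1).resolve_left hnd
      apply hπδ
      simp only [z0, neg_mul, dvd_neg] at k0
      rcases hπ'.dvd_or_dvd k0 with h1 | h1
      · exact h1.mul_right _
      rcases hπ'.dvd_or_dvd k1 with h2 | h2
      · exact h2.mul_right _
      exact (Int.dvd_coe_gcd h2 h1).mul_left _
  · push Not at hq
    have hdw : det w p = det a p := by
      obtain ⟨b, hb, rfl⟩ := hwW
      have hb0 : det b p = 0 := by
        refine AddSubmonoid.closure_induction (motive := fun b _ => det b p = 0) ?_ ?_ ?_ hb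
        · intro q hqt
          have := hq q hqt
          simp only [det] at this ⊢; linarith
        · simp [det]
        · intro x y _ _ hx hy
          simp only [det, Pi.add_apply] at hx hy ⊢
          push_cast
          linear_combination hx + hy
      simp only [det, vadd_eq_add, Pi.add_apply] at hb0 ⊢
      push_cast
      linear_combination hb0
    by_cases hd : det a p = 0
    · exfalso
      rw [hd] at hdw
      have hbz : IsCoprime (w 0 : ℤ) (w 1 : ℤ) := Nat.isCoprime_iff_coprime.2 hcop
      obtain ⟨x, y, hxy⟩ := hbz
      simp only [det] at hdw
      have hg : u p = (x * p 0 + y * p 1) * v := by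
        rw [hvw]
        simp only [u]
        linear_combination (-u1 * p 0 - u2 * p 1) * hxy + (u2 * x - u1 * y) * hdw
      have hupN : u p ≤ N := by have := hNt p hp; omega
      have hg1 : 0 < x * p 0 + y * p 1 := by
        rw [hg] at hup'
        exact (mul_pos_iff_of_pos_right (by omega)).1 hup'
      have : (v : ℤ) ≤ u p := by
        rw [hg]; nlinarith
      omega
    · have hdh : det a p ∣ (h : ℤ) := (hfac _ hd (hNap p hp)).trans hh1
      refine ⟨w + h • p, hadd w hwW _ (AddSubmonoid.nsmul_mem _ hpc _), ?_, ?_⟩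
      · apply coprime_of_forall
        intro π hπ hd0 hd1
        simp only [Pi.add_apply, Pi.smul_apply, smul_eq_mul] at hd0 hd1
        push_cast at hd0 hd1
        have hπd : (π : ℤ) ∣ det a p := by
          rw [← hdw]
          have : det w p = (w 0 + h * p 0) * p 1 - (w 1 + h * p 1) * p 0 := by
            simp only [det]; ring
          rw [this]
          exact dvd_sub (hd0.mul_right _) (hd1.mul_right _)
        have hπh := hπd.trans hdh
        exact not_coprime_dvd hcop hπ ((dvd_add_left (hπh.mul_right _)).1 hd0)
          ((dvd_add_left (hπh.mul_right _)).1 hd1)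
      · simp only [Pi.add_apply, Pi.smul_apply, smul_eq_mul]
        push_cast
        rw [← hh2, hvw]
        simp only [u]
        ring

noncomputable section

def GoodSet (D : ℝ) (S : Set ℝ) : Prop :=
  ∃ I : Finset (ℚ × ℚ), (∀ i ∈ I, 0 < i.1 ∧ 0 < i.2) ∧
    (symmDiff S (⋃ i ∈ I, progSet D i.1 i.2)).Finite

lemma GoodSet.of_finite {D : ℝ} {S : Set ℝ} (h : S.Finite) : GoodSet D S :=
  ⟨∅, by simp, by
    have h0 : symmDiff S (∅ : Set ℝ) = S := symmDiff_bot S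
    simpa [h0] using h⟩

lemma GoodSet.union {D : ℝ} {S T : Set ℝ} (hS : GoodSet D S) (hT : GoodSet D T) :
    GoodSet D (S ∪ T) := by
  classical
  obtain ⟨I, hI, hI'⟩ := hS
  obtain ⟨J, hJ, hJ'⟩ := hT
  refine ⟨I ∪ J, ?_, ?_⟩
  · intro i hi
    rcases Finset.mem_union.1 hi with h | h
    · exact hI i h
    · exact hJ i h
  · refine (hI'.union hJ').subset ?_
    rw [Finset.set_biUnion_union]
    intro x hx
    simp only [Set.mem_symmDiff, Set.mem_union] at hx ⊢
    tauto

lemma GoodSet.biUnion {ι : Type*} {D : ℝ} {s : Set ι} (hs : s.Finite) {f : ι → Set ℝ}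
    (h : ∀ i ∈ s, GoodSet D (f i)) : GoodSet D (⋃ i ∈ s, f i) := by
  induction s, hs using Set.Finite.induction_on with
  | empty => simpa using GoodSet.of_finite (D := D) Set.finite_empty
  | insert _ _ ih =>
    rw [Set.biUnion_insert]
    exact (h _ (Set.mem_insert _ _)).union (ih fun i hi => h i (Set.mem_insert_of_mem _ hi))

lemma GoodSet.iUnion {ι : Type*} [Finite ι] {D : ℝ} {f : ι → Set ℝ}
    (h : ∀ i, GoodSet D (f i)) : GoodSet D (⋃ i, f i) := by
  have := GoodSet.biUnion (D := D) (Set.finite_univ (α := ι)) (f := f) (fun i _ => h i)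
  simpa using this

lemma GoodSet.final {D : ℝ} {S : Set ℝ} (h : GoodSet D S) :
    ∃ (N : ℕ) (α β : Fin N → ℚ), (∀ i, 0 < α i) ∧ (∀ i, 0 < β i) ∧
      (symmDiff S (⋃ i : Fin N, progSet D (α i) (β i))).Finite := by
  obtain ⟨I, hI, hI'⟩ := h
  refine ⟨I.card, fun j => (I.equivFin.symm j).1.1, fun j => (I.equivFin.symm j).1.2,
    fun j => (hI _ (I.equivFin.symm j).2).1, fun j => (hI _ (I.equivFin.symm j).2).2, ?_⟩
  convert hI' using 2
  ext x
  simp only [Set.mem_iUnion]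
  constructor
  · rintro ⟨j, hj⟩
    exact ⟨_, (I.equivFin.symm j).2, hj⟩
  · rintro ⟨i, hi, hx⟩
    refine ⟨I.equivFin ⟨i, hi⟩, ?_⟩
    simpa using hx

lemma GoodSet.of_EP (D : ℝ) (V : Set ℕ) (P v0 : ℕ) (hP : 0 < P)
    (hV : ∀ v ≥ v0, v ∈ V → v + P ∈ V) (d : ℚ) (hd : 0 < d) :
    GoodSet D {x | ∃ v ∈ V, 0 < v ∧ x = D + 1 / ((d : ℝ) * v)} := by
  classical
  let A : ℕ → Set ℕ := fun r => {v | v ∈ V ∧ v0 + 1 ≤ v ∧ v % P = r}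
  let I : Finset (ℚ × ℚ) := ((Finset.range P).filter (fun r => (A r).Nonempty)).image
    (fun r => (d * P, d * (sInf (A r) : ℕ)))
  refine ⟨I, ?_, ?_⟩
  · intro i hi
    obtain ⟨r, hr, rfl⟩ := Finset.mem_image.1 hi
    have hm := Nat.sInf_mem (Finset.mem_filter.1 hr).2
    have h1 : 0 < sInf (A r) := by have := hm.2.1; omega
    refine ⟨by positivity, ?_⟩
    have : (0 : ℚ) < (sInf (A r) : ℕ) := by exact_mod_cast h1
    positivity
  · refine ((Set.finite_Iio (v0 + 1)).image (fun v : ℕ => D + 1 / ((d : ℝ) * v))).subset ?_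
    rintro x (⟨⟨v, hv, hv0, rfl⟩, hx⟩ | ⟨hx, hnx⟩)
    · by_contra hcon
      apply hx
      have hvk : v0 + 1 ≤ v := by
        by_contra hlt
        exact hcon ⟨v, by simpa using hlt, rfl⟩
      have hvA : v ∈ A (v % P) := ⟨hv, hvk, rfl⟩
      have hm := Nat.sInf_mem (⟨v, hvA⟩ : (A (v % P)).Nonempty)
      have hle : sInf (A (v % P)) ≤ v := Nat.sInf_le hvA
      set m := sInf (A (v % P)) with hmdef
      have hmod : m % P = v % P := hm.2.2
      have hdiv : P ∣ v - m := (Nat.modEq_iff_dvd' hle).1 hmod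
      obtain ⟨s, hs⟩ := hdiv
      simp only [Set.mem_iUnion]
      refine ⟨(d * P, d * (m : ℕ)), Finset.mem_image.2 ⟨v % P, Finset.mem_filter.2
        ⟨Finset.mem_range.2 (Nat.mod_lt _ hP), ⟨v, hvA⟩⟩, rfl⟩, s, ?_⟩
      have : v = m + P * s := by omega
      rw [this]
      push_cast
      congr 2
      ring
    · exfalso
      apply hnx
      simp only [Set.mem_iUnion] at hx
      obtain ⟨i, hi, s, rfl⟩ := hx
      obtain ⟨r, hr, rfl⟩ := Finset.mem_image.1 hi
      have hm := Nat.sInf_mem (Finset.mem_filter.1 hr).2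
      set m := sInf (A r) with hmdef
      have hmem : ∀ s : ℕ, m + P * s ∈ V := by
        intro s
        induction s with
        | zero => simpa using hm.1
        | succ s ih =>
          have := hV (m + P * s) (by have := hm.2.1; omega) ih
          rwa [add_assoc, ← Nat.mul_succ] at this
      refine ⟨m + P * s, hmem s, by have := hm.2.1; omega, ?_⟩
      push_cast
      congr 2
      ring

lemma semilinear_good (D : ℝ) (W : Set (Fin 2 → ℕ)) (hW : IsSemilinearSet W) (u1 u2 : ℤ)
    (d : ℚ) (hd : 0 < d) :
    GoodSet D {x | ∃ w ∈ W, Nat.Coprime (w 0) (w 1) ∧ 0 < u1 * (w 0 : ℤ) + u2 * (w 1 : ℤ) ∧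
      x = D + 1 / ((d : ℝ) * ((u1 * (w 0 : ℤ) + u2 * (w 1 : ℤ) : ℤ) : ℝ))} := by
  obtain ⟨S, hS, hlin, rfl⟩ := hW
  have key : ∀ L ∈ S, GoodSet D {x | ∃ w ∈ L, Nat.Coprime (w 0) (w 1) ∧
      0 < u1 * (w 0 : ℤ) + u2 * (w 1 : ℤ) ∧
      x = D + 1 / ((d : ℝ) * ((u1 * (w 0 : ℤ) + u2 * (w 1 : ℤ) : ℤ) : ℝ))} := by
    intro L hL
    obtain ⟨a, t, rfl⟩ := isLinearSet_iff.1 (hlin L hL)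
    obtain ⟨P, hP, v0, hv0⟩ := linear_EP a t u1 u2
    have := GoodSet.of_EP D _ P v0 hP hv0 d hd
    convert this using 1
    ext x
    constructor
    · rintro ⟨w, hw, hc, hpos, rfl⟩
      refine ⟨(u1 * (w 0 : ℤ) + u2 * (w 1 : ℤ)).toNat,
        ⟨w, hw, hc, Int.toNat_of_nonneg hpos.le⟩, by omega, ?_⟩
      congr 3
      have := Int.toNat_of_nonneg hpos.le
      have h2 := congrArg (Int.cast : ℤ → ℝ) this
      rw [← h2]
      norm_cast
    · rintro ⟨v, ⟨w, hw, hc, hvw⟩, hpos, rfl⟩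
      refine ⟨w, hw, hc, by omega, ?_⟩
      rw [← hvw]
      norm_cast
  have h2 := GoodSet.biUnion hS key
  convert h2 using 1
  ext x
  simp only [Set.mem_sUnion, Set.mem_iUnion, Set.mem_ofPred_eq]
  constructor
  · rintro ⟨w, ⟨L, hL, hw⟩, h⟩
    exact ⟨L, hL, w, hw, h⟩
  · rintro ⟨L, hL, w, hw, h⟩
    exact ⟨w, ⟨L, hL, hw⟩, h⟩

end

section SL
open Pointwise

lemma sl_nonneg_int (k : ℤ) : IsSemilinearSet {z : ℤ | 0 ≤ z + k} := by
  have h : IsSemilinearSet ((-k) +ᵥ (AddSubmonoid.closure ({1} : Set ℤ) : Set ℤ)) :=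
    ((IsLinearSet.closure_of_finite (Set.finite_singleton (1 : ℤ))).vadd (-k)).isSemilinearSet
  convert h using 1
  ext z
  rw [Set.mem_vadd_set]
  constructor
  · intro hz
    refine ⟨z + k, ?_, by simp⟩
    have hz' : 0 ≤ z + k := hz
    obtain ⟨m, hm⟩ := Int.eq_ofNat_of_zero_le hz'
    rw [hm]
    exact AddSubmonoid.mem_closure_singleton.2 ⟨m, by simp⟩
  · rintro ⟨y, hy, rfl⟩
    obtain ⟨m, hm⟩ := AddSubmonoid.mem_closure_singleton.1 hy
    simp at hm
    show 0 ≤ -k + y + k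
    omega

variable {M : Type*} [AddCommMonoid M] [AddMonoid.FG M]

lemma sl_ge (f : M →+ ℤ) (k : ℤ) : IsSemilinearSet {z : M | 0 ≤ f z + k} :=
  (sl_nonneg_int k).preimage f

lemma sl_and {P Q : M → Prop} (hP : IsSemilinearSet {z | P z}) (hQ : IsSemilinearSet {z | Q z}) :
    IsSemilinearSet {z | P z ∧ Q z} := hP.inter hQ

lemma sl_not {P : M → Prop} (hP : IsSemilinearSet {z | P z}) :
    IsSemilinearSet {z | ¬ P z} := hP.compl

lemma sl_imp {P Q : M → Prop} (hP : IsSemilinearSet {z | P z}) (hQ : IsSemilinearSet {z | Q z}) :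
    IsSemilinearSet {z | P z → Q z} := by
  have h := hP.compl.union hQ
  convert h using 1
  ext z
  simp [imp_iff_not_or]

lemma sl_forall {ι : Type*} [Finite ι] {P : ι → M → Prop} (h : ∀ i, IsSemilinearSet {z | P i z}) :
    IsSemilinearSet {z | ∀ i, P i z} := by
  have h := IsSemilinearSet.iInter h
  convert h using 1
  ext z
  simp

lemma sl_ball {ι : Type*} (s : Finset ι) {P : ι → M → Prop}
    (h : ∀ i, IsSemilinearSet {z | P i z}) :
    IsSemilinearSet {z | ∀ i ∈ s, P i z} := by
  have h := IsSemilinearSet.biInter_finset (s := s) (fun i _ => h i)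
  convert h using 1
  ext z
  simp

lemma sl_bex {ι : Type*} (s : Finset ι) {P : ι → M → Prop}
    (h : ∀ i, IsSemilinearSet {z | P i z}) :
    IsSemilinearSet {z | ∃ i ∈ s, P i z} := by
  have h := IsSemilinearSet.biUnion_finset (s := s) (fun i _ => h i)
  convert h using 1
  ext z
  simp

lemma sl_ex {P : M → ℤ → Prop} (h : IsSemilinearSet {z : M × ℤ | P z.1 z.2}) :
    IsSemilinearSet {z | ∃ c, P z c} := by
  have h := h.image (AddMonoidHom.fst M ℤ)
  convert h using 1
  ext z
  simp

/-- linear forms on `ℕ² × ℤ` -/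
def lf3 (a b c : ℤ) : (Fin 2 → ℕ) × ℤ →+ ℤ where
  toFun z := a * (z.1 0 : ℤ) + b * (z.1 1 : ℤ) + c * z.2
  map_zero' := by simp
  map_add' := by intro p q; simp; ring

/-- linear forms on `ℕ²` -/
def lf2 (a b : ℤ) : (Fin 2 → ℕ) →+ ℤ where
  toFun z := a * (z 0 : ℤ) + b * (z 1 : ℤ)
  map_zero' := by simp
  map_add' := by intro p q; simp; ring

lemma sl3 (f : (Fin 2 → ℕ) × ℤ → ℤ) (a b c k : ℤ)
    (h : ∀ z, f z = a * (z.1 0 : ℤ) + b * (z.1 1 : ℤ) + c * z.2 + k) :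
    IsSemilinearSet {z : (Fin 2 → ℕ) × ℤ | 0 ≤ f z} := by
  have := sl_ge (lf3 a b c) k
  simp only [h]; exact this

lemma sl2 (f : (Fin 2 → ℕ) → ℤ) (a b k : ℤ)
    (h : ∀ z, f z = a * (z 0 : ℤ) + b * (z 1 : ℤ) + k) :
    IsSemilinearSet {z : (Fin 2 → ℕ) | 0 ≤ f z} := by
  have := sl_ge (lf2 a b) k
  simp only [h]; exact this

end SL

def Aw {n : ℕ} (x y : Fin n → ℤ) (w : Fin 2 → ℕ) (i : Fin n) : ℤ :=
  x i * (w 0 : ℤ) + y i * (w 1 : ℤ)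

def Nw {n : ℕ} (x y m : Fin n → ℤ) (w : Fin 2 → ℕ) (c : ℤ) (i j : Fin n) : ℤ :=
  (2 * m i + 1) * Aw x y w j - (2 * m j + 1) * Aw x y w i + 2 * (x i * y j - x j * y i) * c

def Np {n : ℕ} (x y : Fin n → ℤ) (A B : ℤ) (m : Fin n → ℤ) (w : Fin 2 → ℕ) (c : ℤ)
    (i j : Fin n) : ℤ :=
  B * Nw x y m w c i j - 2 * A * (Aw x y w i + Aw x y w j)

def Gpred {n : ℕ} (x y : Fin n → ℤ) (A B : ℤ) (box : Finset (Fin n → ℤ)) (E : ℕ) (e : ℕ)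
    (k l : Fin n) (w : Fin 2 → ℕ) : Prop :=
  ∃ m ∈ box, ∃ c : ℤ, ∀ i j, 0 ≤ E - Np x y A B m w c i j ∧
    ∀ q ∈ Finset.Icc 1 E, 0 ≤ Np x y A B m w c i j - q →
      0 ≤ e * (Aw x y w i + Aw x y w j) - q * (Aw x y w k + Aw x y w l)

def Wpred {n : ℕ} (x y : Fin n → ℤ) (A B : ℤ) (box : Finset (Fin n → ℤ)) (E : ℕ) (e : ℕ)
    (k l : Fin n) (w : Fin 2 → ℕ) : Prop :=
  (∀ i, 0 ≤ Aw x y w i - 1) ∧ Gpred x y A B box E e k l w ∧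
    ∀ e' ∈ Finset.range (E + 1), ∀ k' l',
      0 ≤ e * (Aw x y w k' + Aw x y w l') - e' * (Aw x y w k + Aw x y w l) - 1 →
        ¬ Gpred x y A B box E e' k' l' w

lemma sl_G {n : ℕ} (x y : Fin n → ℤ) (A B : ℤ) (box : Finset (Fin n → ℤ)) (E : ℕ) (e : ℕ)
    (k l : Fin n) : IsSemilinearSet {w | Gpred x y A B box E e k l w} := by
  unfold Gpred
  refine sl_bex _ fun m => sl_ex ?_
  refine sl_forall fun i => sl_forall fun j => sl_and ?_ ?_
  · refine sl3 _ (-(B * ((2 * m i + 1) * x j - (2 * m j + 1) * x i) - 2 * A * (x i + x j)))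
      (-(B * ((2 * m i + 1) * y j - (2 * m j + 1) * y i) - 2 * A * (y i + y j)))
      (-(B * (2 * (x i * y j - x j * y i)))) E ?_
    intro z
    simp only [Np, Nw, Aw]; ring
  · refine sl_ball _ fun q => sl_imp ?_ ?_
    · refine sl3 _ ((B * ((2 * m i + 1) * x j - (2 * m j + 1) * x i) - 2 * A * (x i + x j)))
        ((B * ((2 * m i + 1) * y j - (2 * m j + 1) * y i) - 2 * A * (y i + y j)))
        ((B * (2 * (x i * y j - x j * y i)))) (-q) ?_
      intro z
      simp only [Np, Nw, Aw]; ring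
    · refine sl3 _ (e * (x i + x j) - q * (x k + x l)) (e * (y i + y j) - q * (y k + y l)) 0 0 ?_
      intro z
      simp only [Aw]; ring

lemma sl_W {n : ℕ} (x y : Fin n → ℤ) (A B : ℤ) (box : Finset (Fin n → ℤ)) (E : ℕ) (e : ℕ)
    (k l : Fin n) : IsSemilinearSet {w | Wpred x y A B box E e k l w} := by
  unfold Wpred
  refine sl_and (sl_forall fun i => ?_) (sl_and (sl_G _ _ _ _ _ _ _ _ _) (sl_ball _ fun e' =>
    sl_forall fun k' => sl_forall fun l' => sl_imp ?_ (sl_not (sl_G _ _ _ _ _ _ _ _ _))))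
  · refine sl2 _ (x i) (y i) (-1) ?_
    intro z
    simp only [Aw]; ring
  · refine sl2 _ (e * (x k' + x l') - e' * (x k + x l)) (e * (y k' + y l') - e' * (y k + y l))
      (-1) ?_
    intro z
    simp only [Aw]; ring

section core
variable {n : ℕ} (x y : Fin n → ℤ) (D : ℝ) (DT : (Fin 2 → ℕ) → ℝ) (A B : ℤ)
  (box : Finset (Fin n → ℤ)) (E : ℕ)

lemma Np_le_iff (hB : 0 < B) (hD : D = A / B) (m w c i j) (δ : ℝ) :
    ((Nw x y m w c i j : ℤ) : ℝ) ≤ 2 * δ * ((Aw x y w i + Aw x y w j : ℤ) : ℝ) ↔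
    ((Np x y A B m w c i j : ℤ) : ℝ) ≤ 2 * B * (δ - D) * ((Aw x y w i + Aw x y w j : ℤ) : ℝ) := by
  have hB' : (0 : ℝ) < B := by exact_mod_cast hB
  have hBD : (B : ℝ) * D = A := by rw [hD]; field_simp
  unfold Np
  generalize Nw x y m w c i j = N
  generalize Aw x y w i + Aw x y w j = M
  push_cast
  rw [← hBD]
  rw [← mul_le_mul_iff_right₀ hB']
  constructor <;> intro h <;> nlinarith

lemma G_iff (hB : 0 < B) (hD : D = A / B) (w : Fin 2 → ℕ) (hA : ∀ i, 0 < Aw x y w i)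
    (L2 : ∀ δ : ℝ, DT w ≤ δ ↔ ∃ m ∈ box, ∃ c, ∀ i j,
      ((Nw x y m w c i j : ℤ) : ℝ) ≤ 2 * δ * ((Aw x y w i + Aw x y w j : ℤ) : ℝ))
    (L3 : ∀ i j, 2 * B * (DT w - D) * ((Aw x y w i + Aw x y w j : ℤ) : ℝ) ≤ E)
    (e : ℕ) (k l : Fin n) :
    Gpred x y A B box E e k l w ↔
      DT w ≤ D + e / (2 * B * ((Aw x y w k + Aw x y w l : ℤ) : ℝ)) := by
  have hB' : (0 : ℝ) < B := by exact_mod_cast hB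
  have hM : ∀ i j, (0 : ℝ) < ((Aw x y w i + Aw x y w j : ℤ) : ℝ) := fun i j => by
    have h1 := hA i
    have h2 := hA j
    exact_mod_cast add_pos h1 h2
  constructor
  · rintro ⟨m, hm, c, h⟩
    rw [L2]
    refine ⟨m, hm, c, fun i j => ?_⟩
    rw [Np_le_iff x y D A B hB hD]
    obtain ⟨h1, h2⟩ := h i j
    have e1 : 2 * (B : ℝ) * (D + e / (2 * B * ((Aw x y w k + Aw x y w l : ℤ) : ℝ)) - D)
        * ((Aw x y w i + Aw x y w j : ℤ) : ℝ)
        = e * ((Aw x y w i + Aw x y w j : ℤ) : ℝ) / ((Aw x y w k + Aw x y w l : ℤ) : ℝ) := by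
      have := hM k l
      field_simp
      ring
    rw [e1, le_div_iff₀ (hM k l)]
    by_cases hN : Np x y A B m w c i j ≤ 0
    · have : ((Np x y A B m w c i j : ℤ) : ℝ) ≤ 0 := by exact_mod_cast hN
      have h3 := hM k l
      have h4 := hM i j
      have h5 : (0 : ℝ) ≤ e * ((Aw x y w i + Aw x y w j : ℤ) : ℝ) := by positivity
      nlinarith
    · push Not at hN
      have h3 := h2 (Np x y A B m w c i j).toNat (by rw [Finset.mem_Icc]; omega) (by omega)
      have h4 : (((Np x y A B m w c i j).toNat : ℕ) : ℤ) = Np x y A B m w c i j := by omega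
      rw [h4] at h3
      have h5 : Np x y A B m w c i j * (Aw x y w k + Aw x y w l)
        ≤ e * (Aw x y w i + Aw x y w j) := by linarith
      exact_mod_cast h5
  · intro h
    obtain ⟨m, hm, c, h0⟩ := (L2 (DT w)).1 le_rfl
    refine ⟨m, hm, c, fun i j => ?_⟩
    have h1 := (Np_le_iff x y D A B hB hD _ _ _ _ _ _).1 (h0 i j)
    have h2 := h1.trans (L3 i j)
    have h2' : Np x y A B m w c i j ≤ E := by exact_mod_cast h2
    refine ⟨by omega, fun q hq hq2 => ?_⟩
    have h3 : (q : ℝ) ≤ ((Np x y A B m w c i j : ℤ) : ℝ) := by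
      have : (q : ℤ) ≤ Np x y A B m w c i j := by omega
      exact_mod_cast this
    have h4 : DT w - D ≤ e / (2 * B * ((Aw x y w k + Aw x y w l : ℤ) : ℝ)) := by linarith
    have h5 := hM k l
    rw [le_div_iff₀ (by positivity)] at h4
    have h6 : (q : ℝ) * ((Aw x y w k + Aw x y w l : ℤ) : ℝ)
        ≤ e * ((Aw x y w i + Aw x y w j : ℤ) : ℝ) := by
      have h7 : (q : ℝ) ≤ 2 * B * (DT w - D) * ((Aw x y w i + Aw x y w j : ℤ) : ℝ) := h3.trans h1
      have h8 := hM i j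
      calc (q : ℝ) * ((Aw x y w k + Aw x y w l : ℤ) : ℝ)
          ≤ (2 * B * (DT w - D) * ((Aw x y w i + Aw x y w j : ℤ) : ℝ))
            * ((Aw x y w k + Aw x y w l : ℤ) : ℝ) := by gcongr
        _ = ((DT w - D) * (2 * B * ((Aw x y w k + Aw x y w l : ℤ) : ℝ)))
            * ((Aw x y w i + Aw x y w j : ℤ) : ℝ) := by ring
        _ ≤ _ := by gcongr
    have h9 : (q : ℤ) * (Aw x y w k + Aw x y w l) ≤ e * (Aw x y w i + Aw x y w j) := by
      exact_mod_cast h6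
    linarith

lemma attained [Nonempty (Fin n)] (hB : 0 < B) (hD : D = A / B) (w : Fin 2 → ℕ)
    (hA : ∀ i, 0 < Aw x y w i)
    (L2 : ∀ δ : ℝ, DT w ≤ δ ↔ ∃ m ∈ box, ∃ c, ∀ i j,
      ((Nw x y m w c i j : ℤ) : ℝ) ≤ 2 * δ * ((Aw x y w i + Aw x y w j : ℤ) : ℝ))
    (L3 : ∀ i j, 2 * B * (DT w - D) * ((Aw x y w i + Aw x y w j : ℤ) : ℝ) ≤ E)
    (L4 : D ≤ DT w) :
    ∃ e ∈ Finset.range (E + 1), ∃ k l,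
      DT w = D + (e : ℝ) / (2 * B * ((Aw x y w k + Aw x y w l : ℤ) : ℝ)) := by
  have hB' : (0 : ℝ) < B := by exact_mod_cast hB
  have hM : ∀ i j, (0 : ℝ) < ((Aw x y w i + Aw x y w j : ℤ) : ℝ) := fun i j => by
    have h1 := hA i
    have h2 := hA j
    exact_mod_cast add_pos h1 h2
  obtain ⟨m, hm, c, h0⟩ := (L2 (DT w)).1 le_rfl
  by_cases hx : ∃ i j, ((Nw x y m w c i j : ℤ) : ℝ)
      = 2 * DT w * ((Aw x y w i + Aw x y w j : ℤ) : ℝ)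
  · obtain ⟨i, j, hij⟩ := hx
    have h1 := (Np_le_iff x y D A B hB hD m w c i j (DT w)).1 hij.le
    have h2 : 2 * B * (DT w - D) * ((Aw x y w i + Aw x y w j : ℤ) : ℝ)
        = ((Np x y A B m w c i j : ℤ) : ℝ) := by
      have hBD : (B : ℝ) * D = A := by rw [hD]; field_simp
      unfold Np
      rw [Int.cast_sub, Int.cast_mul, hij, Int.cast_mul, Int.cast_mul, ← hBD]
      push_cast; ring
    have h3 : (0 : ℝ) ≤ ((Np x y A B m w c i j : ℤ) : ℝ) := by
      rw [← h2]
      have := hM i j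
      have : 0 ≤ DT w - D := by linarith
      positivity
    have h3' : 0 ≤ Np x y A B m w c i j := by exact_mod_cast h3
    have h4 : Np x y A B m w c i j ≤ E := by
      have := h1.trans (L3 i j)
      exact_mod_cast this
    have h5 : (((Np x y A B m w c i j).toNat : ℕ) : ℤ) = Np x y A B m w c i j := by omega
    refine ⟨(Np x y A B m w c i j).toNat, by rw [Finset.mem_range]; omega, i, j, ?_⟩
    have h6 : (((Np x y A B m w c i j).toNat : ℕ) : ℝ) = ((Np x y A B m w c i j : ℤ) : ℝ) := by
      exact_mod_cast h5
    rw [h6, ← h2]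
    have := hM i j
    field_simp
    ring
  · exfalso
    push Not at hx
    have hlt : ∀ p : Fin n × Fin n, ((Nw x y m w c p.1 p.2 : ℤ) : ℝ)
        / (2 * ((Aw x y w p.1 + Aw x y w p.2 : ℤ) : ℝ)) < DT w := fun p => by
      have := hM p.1 p.2
      rw [div_lt_iff₀ (by positivity)]
      have h1 := lt_of_le_of_ne (h0 p.1 p.2) (hx p.1 p.2)
      linarith
    obtain ⟨p, -, hp⟩ := Finset.exists_max_image (Finset.univ : Finset (Fin n × Fin n))
      (fun p => ((Nw x y m w c p.1 p.2 : ℤ) : ℝ)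
        / (2 * ((Aw x y w p.1 + Aw x y w p.2 : ℤ) : ℝ))) Finset.univ_nonempty
    refine not_le.2 (hlt p) ((L2 _).2 ⟨m, hm, c, fun i j => ?_⟩)
    · have h2 := hp (i, j) (Finset.mem_univ _)
      have := hM i j
      rw [div_le_iff₀ (by simpa using this)] at h2
      linarith

theorem core_abs [Nonempty (Fin n)] (hB : 0 < B) (hD : D = A / B)
    (L2 : ∀ w : Fin 2 → ℕ, Nat.Coprime (w 0) (w 1) → (∀ i, 0 < Aw x y w i) →
      ∀ δ : ℝ, DT w ≤ δ ↔ ∃ m ∈ box, ∃ c, ∀ i j,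
      ((Nw x y m w c i j : ℤ) : ℝ) ≤ 2 * δ * ((Aw x y w i + Aw x y w j : ℤ) : ℝ))
    (L3 : ∀ w : Fin 2 → ℕ, Nat.Coprime (w 0) (w 1) → (∀ i, 0 < Aw x y w i) →
      ∀ i j, 2 * B * (DT w - D) * ((Aw x y w i + Aw x y w j : ℤ) : ℝ) ≤ E)
    (L4 : ∀ w : Fin 2 → ℕ, Nat.Coprime (w 0) (w 1) → (∀ i, 0 < Aw x y w i) → D ≤ DT w) :
    GoodSet D {d | ∃ w : Fin 2 → ℕ, Nat.Coprime (w 0) (w 1) ∧ (∀ i, 0 < Aw x y w i) ∧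
      d = DT w} := by
  have hB' : (0 : ℝ) < B := by exact_mod_cast hB
  have key : {d | ∃ w : Fin 2 → ℕ, Nat.Coprime (w 0) (w 1) ∧ (∀ i, 0 < Aw x y w i) ∧
      d = DT w} = ⋃ t ∈ ((Finset.range (E + 1) ×ˢ (Finset.univ : Finset (Fin n × Fin n)) :
        Finset (ℕ × Fin n × Fin n)) : Set (ℕ × Fin n × Fin n)),
        {d | ∃ w, Wpred x y A B box E t.1 t.2.1 t.2.2 w ∧ Nat.Coprime (w 0) (w 1) ∧
          d = D + (t.1 : ℝ) / (2 * B * ((Aw x y w t.2.1 + Aw x y w t.2.2 : ℤ) : ℝ))} := by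
    ext d
    simp only [Set.mem_ofPred_eq, Set.mem_iUnion, Finset.mem_coe, Finset.mem_product,
      Finset.mem_univ, and_true, exists_prop, Prod.exists]
    constructor
    · rintro ⟨w, hw, hA, rfl⟩
      obtain ⟨e, he, k, l, h⟩ := attained x y D DT A B box E hB hD w hA (L2 w hw hA) (L3 w hw hA)
        (L4 w hw hA)
      refine ⟨e, k, l, he, w, ⟨fun i => by have := hA i; omega, ?_, ?_⟩, hw, h⟩
      · rw [G_iff x y D DT A B box E hB hD w hA (L2 w hw hA) (L3 w hw hA)]
        exact h.le
      · intro e' he' k' l' hlt hG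
        rw [G_iff x y D DT A B box E hB hD w hA (L2 w hw hA) (L3 w hw hA), h] at hG
        have h1 := hA k
        have h2 := hA l
        have h3 := hA k'
        have h4 := hA l'
        have h5 : (0 : ℝ) < ((Aw x y w k + Aw x y w l : ℤ) : ℝ) := by
          exact_mod_cast add_pos h1 h2
        have h6 : (0 : ℝ) < ((Aw x y w k' + Aw x y w l' : ℤ) : ℝ) := by
          exact_mod_cast add_pos h3 h4
        have h7 : (e' : ℤ) * (Aw x y w k + Aw x y w l) < e * (Aw x y w k' + Aw x y w l') := by
          omega
        have h8 : (e' : ℝ) * ((Aw x y w k + Aw x y w l : ℤ) : ℝ)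
          < e * ((Aw x y w k' + Aw x y w l' : ℤ) : ℝ) := by exact_mod_cast h7
        have h9 := (add_le_add_iff_left D).1 hG
        rw [div_le_div_iff₀ (by positivity) (by positivity)] at h9
        nlinarith
    · rintro ⟨e, k, l, he, w, ⟨hA', hG, hW⟩, hw, rfl⟩
      have hA : ∀ i, 0 < Aw x y w i := fun i => by have := hA' i; omega
      refine ⟨w, hw, hA, ?_⟩
      rw [G_iff x y D DT A B box E hB hD w hA (L2 w hw hA) (L3 w hw hA)] at hG
      refine le_antisymm ?_ hG
      by_contra hlt
      push Not at hlt
      obtain ⟨e', he', k', l', h⟩ := attained x y D DT A B box E hB hD w hA (L2 w hw hA)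
        (L3 w hw hA) (L4 w hw hA)
      refine hW e' he' k' l' ?_ ?_
      · rw [h] at hlt
        have h1 := hA k
        have h2 := hA l
        have h3 := hA k'
        have h4 := hA l'
        have h5 : (0 : ℝ) < ((Aw x y w k + Aw x y w l : ℤ) : ℝ) := by
          exact_mod_cast add_pos h1 h2
        have h6 : (0 : ℝ) < ((Aw x y w k' + Aw x y w l' : ℤ) : ℝ) := by
          exact_mod_cast add_pos h3 h4
        have h9 := (add_lt_add_iff_left D).1 hlt
        rw [div_lt_div_iff₀ (by positivity) (by positivity)] at h9
        have h8 : (e' : ℝ) * ((Aw x y w k + Aw x y w l : ℤ) : ℝ)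
          < e * ((Aw x y w k' + Aw x y w l' : ℤ) : ℝ) := by nlinarith
        have h7 : (e' : ℤ) * (Aw x y w k + Aw x y w l) < e * (Aw x y w k' + Aw x y w l') := by
          exact_mod_cast h8
        omega
      · rw [G_iff x y D DT A B box E hB hD w hA (L2 w hw hA) (L3 w hw hA)]
        exact h.le
  rw [key]
  refine GoodSet.biUnion (Finset.finite_toSet _) ?_
  rintro ⟨e, k, l⟩ -
  dsimp only
  rcases Nat.eq_zero_or_pos e with rfl | he
  · refine GoodSet.of_finite ((Set.finite_singleton D).subset ?_)
    rintro d ⟨w, -, -, rfl⟩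
    simp
  · have he' : (0 : ℚ) < e := by exact_mod_cast he
    have hBq : (0 : ℚ) < B := by exact_mod_cast hB
    have hs := semilinear_good D _ (sl_W x y A B box E e k l) (x k + x l) (y k + y l)
      (2 * B / e) (by positivity)
    convert hs using 1
    ext d
    constructor
    · rintro ⟨w, hW, hw, rfl⟩
      have hM : (x k + x l) * (w 0 : ℤ) + (y k + y l) * (w 1 : ℤ) = Aw x y w k + Aw x y w l := by
        simp only [Aw]; ring
      refine ⟨w, hW, hw, ?_, ?_⟩
      · have h1 := hW.1 k
        have h2 := hW.1 l
        omega
      · rw [hM]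
        have h1 := hW.1 k
        have h2 := hW.1 l
        have h5 : (0 : ℝ) < ((Aw x y w k + Aw x y w l : ℤ) : ℝ) := by
          exact_mod_cast (by omega : 0 < Aw x y w k + Aw x y w l)
        have he'' : (0 : ℝ) < e := by exact_mod_cast he
        push_cast at h5 ⊢
        field_simp
    · rintro ⟨w, hW, hw, -, rfl⟩
      have hM : (x k + x l) * (w 0 : ℤ) + (y k + y l) * (w 1 : ℤ) = Aw x y w k + Aw x y w l := by
        simp only [Aw]; ring
      refine ⟨w, hW, hw, ?_⟩
      rw [hM]
      have h1 := hW.1 k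
      have h2 := hW.1 l
      have h5 : (0 : ℝ) < ((Aw x y w k + Aw x y w l : ℤ) : ℝ) := by
        exact_mod_cast (by omega : 0 < Aw x y w k + Aw x y w l)
      have he'' : (0 : ℝ) < e := by exact_mod_cast he
      push_cast at h5 ⊢
      field_simp

end core

lemma exists_phi : ∃ φ : ℝ →ₗ[ℚ] ℚ, φ 1 = 1 := by
  obtain ⟨g, hg⟩ := LinearMap.exists_leftInverse_of_injective (Algebra.linearMap ℚ ℝ)
    (LinearMap.ker_eq_bot.2 (by
      intro a b h
      simpa using h))
  refine ⟨g, ?_⟩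
  have := LinearMap.congr_fun hg 1
  simpa using this

lemma small_pert {ι : Type*} [Finite ι] (g h : ι → ℝ) (hg : ∀ i, 0 ≤ g i)
    (hgh : ∀ i, g i = 0 → h i = 0) :
    ∃ ε > 0, ∀ t : ℝ, |t| ≤ ε → ∀ i, 0 ≤ g i + t * h i := by
  have h1 : ∀ᶠ t in nhds (0 : ℝ), ∀ i, 0 ≤ g i + t * h i := by
    rw [Filter.eventually_all]
    intro i
    rcases (hg i).eq_or_lt with h0 | h0
    · simp [← h0, hgh i h0.symm]
    · have hc : Continuous fun t : ℝ => g i + t * h i := by fun_prop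
      have : ∀ᶠ t in nhds (0 : ℝ), 0 < g i + t * h i :=
        hc.continuousAt.eventually (lt_mem_nhds (by simpa using h0))
      exact this.mono fun t ht => ht.le
  obtain ⟨ε, hε, h2⟩ := Metric.eventually_nhds_iff.1 h1
  refine ⟨ε / 2, by positivity, fun t ht => h2 ?_⟩
  rw [Real.dist_eq, sub_zero]
  linarith

lemma rational_D {n : ℕ} (x y : Fin n → ℤ) (D : ℝ)
    (HU : ∀ δ : ℝ, D ≤ δ ↔ ∃ p q : ℝ, ∀ i, ∃ m : ℤ, |x i * p + y i * q - 1 / 2 - m| ≤ δ) :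
    ∃ A B : ℤ, 0 < B ∧ D = A / B := by
  obtain ⟨φ, hφ⟩ := exists_phi
  obtain ⟨p, q, h⟩ := (HU D).1 le_rfl
  choose m hm using h
  have hφz : ∀ (z : ℤ) (r : ℝ), φ (z * r) = z * φ r := fun z r => by
    have := φ.map_smul (z : ℚ) r
    rw [Rat.smul_def] at this
    simpa using this
  have hφq : ∀ (z : ℚ), φ (z : ℝ) = z := fun z => by
    have := φ.map_smul z 1
    rw [Rat.smul_def, hφ] at this
    simpa using this
  let f : Fin n → ℝ := fun i => x i * p + y i * q - 1 / 2 - m i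
  have hf : ∀ i, (φ (f i) : ℝ) = x i * (φ p : ℝ) + y i * (φ q : ℝ) - 1 / 2 - m i := fun i => by
    have h1 : f i = x i * p + y i * q - ((1 / 2 + m i : ℚ) : ℝ) := by
      simp only [f]; push_cast; ring
    rw [h1, map_sub, map_add, hφz, hφz, hφq]
    push_cast; ring
  have hpos : ∀ i, 0 ≤ D - f i ∧ 0 ≤ D + f i := fun i => by
    have := abs_le.1 (hm i)
    simp only [f]
    constructor <;> linarith
  obtain ⟨ε, hε, h1⟩ := small_pert (fun i => D - f i)
    (fun i => ((φ (D - f i) : ℚ) : ℝ) - (D - f i)) (fun i => (hpos i).1)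
    (fun i hi => by rw [hi]; simp)
  obtain ⟨ε', hε', h2⟩ := small_pert (fun i => D + f i)
    (fun i => ((φ (D + f i) : ℚ) : ℝ) - (D + f i)) (fun i => (hpos i).2)
    (fun i hi => by rw [hi]; simp)
  have h3 : ∀ t : ℝ, |t| ≤ min ε ε' → D ≤ D + t * (φ D - D) := fun t ht => by
    rw [HU]
    refine ⟨p + t * (φ p - p), q + t * (φ q - q), fun i => ⟨m i, ?_⟩⟩
    have h4 := h1 t (ht.trans (min_le_left _ _)) i
    have h5 := h2 t (ht.trans (min_le_right _ _)) i
    have e1 : x i * (p + t * (φ p - p)) + y i * (q + t * (φ q - q)) - 1 / 2 - m i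
        = f i + t * (φ (f i) - f i) := by
      rw [hf]; simp only [f]; ring
    rw [e1, abs_le]
    rw [map_sub] at h4
    rw [map_add] at h5
    push_cast at h4 h5
    constructor <;> linarith
  have hε2 : 0 < min ε ε' := lt_min hε hε'
  have h4 := h3 (min ε ε') (by rw [abs_of_pos hε2])
  have h5 := h3 (-min ε ε') (by rw [abs_neg, abs_of_pos hε2])
  have h6 : (φ D : ℝ) = D := by
    have h7 : 0 ≤ min ε ε' * (φ D - D) := by linarith
    have h8 : min ε ε' * (φ D - D) ≤ 0 := by linarith
    have h9 : min ε ε' * (φ D - D) = 0 := le_antisymm h8 h7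
    rcases mul_eq_zero.1 h9 with h | h
    · linarith
    · linarith
  refine ⟨(φ D).num, (φ D).den, by exact_mod_cast (φ D).den_pos, ?_⟩
  have := Rat.num_div_den (φ D)
  calc D = ((φ D : ℚ) : ℝ) := h6.symm
    _ = (((φ D).num / (φ D).den : ℚ) : ℝ) := by rw [this]
    _ = _ := by push_cast; rfl

lemma bezout (a b : ℕ) (h : Nat.Coprime a b) : ∃ u v : ℤ, u * a + v * b = 1 := by
  have := Int.isCoprime_iff_gcd_eq_one.2 (by simpa using h : Int.gcd (a : ℤ) b = 1)
  exact this

section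
variable {n : ℕ} (x y : Fin n → ℤ)

lemma L2_lemma [Nonempty (Fin n)] (K : ℤ) (hK : ∀ i, 1 + |x i| + |y i| ≤ K) (w : Fin 2 → ℕ)
    (hw : Nat.Coprime (w 0) (w 1)) (hA : ∀ i, 0 < Aw x y w i) (d : ℝ)
    (HT : ∀ δ : ℝ, d ≤ δ ↔ ∃ τ : ℝ, ∀ i, ∃ m : ℤ, |τ * (Aw x y w i : ℤ) - 1 / 2 - m| ≤ δ) (δ : ℝ) :
    d ≤ δ ↔ ∃ m ∈ Finset.Icc (fun _ : Fin n => -K) (fun _ => K), ∃ c, ∀ i j,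
      ((Nw x y m w c i j : ℤ) : ℝ) ≤ 2 * δ * ((Aw x y w i + Aw x y w j : ℤ) : ℝ) := by
  rw [HT]
  constructor
  · rintro ⟨τ, h⟩
    let m : Fin n → ℤ := fun i => round (τ * (Aw x y w i : ℤ) - 1 / 2)
    have hm1 : ∀ i, |τ * (Aw x y w i : ℤ) - 1 / 2 - m i| ≤ δ := fun i => by
      obtain ⟨k, hk⟩ := h i
      exact (round_le _ _).trans hk
    have hm2 : ∀ i, |τ * (Aw x y w i : ℤ) - 1 / 2 - m i| ≤ 1 / 2 := fun i => abs_sub_round _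
    let g1 : ℤ := ⌊τ * (w 0 : ℝ)⌋
    let g2 : ℤ := ⌊τ * (w 1 : ℝ)⌋
    refine ⟨fun i => m i - (x i * g1 + y i * g2), ?_, g1 * w 1 - g2 * w 0, ?_⟩
    · rw [Finset.mem_Icc, Pi.le_def, Pi.le_def, ← forall_and]
      intro i
      have e1 : ((m i - (x i * g1 + y i * g2) : ℤ) : ℝ)
          = x i * Int.fract (τ * (w 0 : ℝ)) + y i * Int.fract (τ * (w 1 : ℝ)) - 1 / 2
            - (τ * (Aw x y w i : ℤ) - 1 / 2 - m i) := by
        simp only [Int.fract, Aw, g1, g2]; push_cast; ring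
      have a1 : |(x i : ℝ) * Int.fract (τ * (w 0 : ℝ))| ≤ |(x i : ℝ)| := by
        rw [abs_mul, abs_of_nonneg (a := Int.fract _) (Int.fract_nonneg _)]
        exact mul_le_of_le_one_right (abs_nonneg _) (Int.fract_lt_one _).le
      have a2 : |(y i : ℝ) * Int.fract (τ * (w 1 : ℝ))| ≤ |(y i : ℝ)| := by
        rw [abs_mul, abs_of_nonneg (a := Int.fract _) (Int.fract_nonneg _)]
        exact mul_le_of_le_one_right (abs_nonneg _) (Int.fract_lt_one _).le
      have a3 := hm2 i
      have a4 : (1 : ℝ) + |(x i : ℝ)| + |(y i : ℝ)| ≤ K := by exact_mod_cast hK i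
      rw [abs_le] at a1 a2 a3
      constructor
      · have : ((-K : ℤ) : ℝ) ≤ ((m i - (x i * g1 + y i * g2) : ℤ) : ℝ) := by
          rw [e1]; push_cast; linarith
        exact_mod_cast this
      · have : ((m i - (x i * g1 + y i * g2) : ℤ) : ℝ) ≤ ((K : ℤ) : ℝ) := by
          rw [e1]; linarith
        exact_mod_cast this
    · intro i j
      have e1 : Nw x y (fun i => m i - (x i * g1 + y i * g2)) w (g1 * w 1 - g2 * w 0) i j
          = (2 * m i + 1) * Aw x y w j - (2 * m j + 1) * Aw x y w i := by
        simp only [Nw, Aw]; ring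
      rw [e1]
      have h1 := (abs_le.1 (hm1 i)).2
      have h2 := (abs_le.1 (hm1 j)).1
      have hi : (0 : ℝ) < (Aw x y w i : ℤ) := by exact_mod_cast hA i
      have hj : (0 : ℝ) < (Aw x y w j : ℤ) := by exact_mod_cast hA j
      have h1 := (abs_le.1 (hm1 i)).1
      have h2 := (abs_le.1 (hm1 j)).2
      have h1 := (abs_le.1 (hm1 i)).2
      have h2 := (abs_le.1 (hm1 j)).1
      have b1 := (abs_le.1 (hm1 i)).1
      have b2 := (abs_le.1 (hm1 j)).2
      push_cast
      generalize ((Aw x y w i : ℤ) : ℝ) = P at *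
      generalize ((Aw x y w j : ℤ) : ℝ) = Q at *
      have c1 := mul_le_mul_of_nonneg_right b1 hj.le
      have c2 := mul_le_mul_of_nonneg_right b2 hi.le
      have c3 := mul_le_mul_of_nonneg_right h1 hj.le
      have c4 := mul_le_mul_of_nonneg_right h2 hi.le
      linarith
  · rintro ⟨m0, -, c, h⟩
    obtain ⟨u, v, huv⟩ := bezout _ _ hw
    let g1 : ℤ := c * v
    let g2 : ℤ := -c * u
    have hg : g1 * w 1 - g2 * w 0 = c := by
      simp only [g1, g2]; linear_combination c * huv
    let m : Fin n → ℤ := fun i => m0 i + (x i * g1 + y i * g2)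
    have h' : ∀ i j, (m i + 1 / 2 - δ) / ((Aw x y w i : ℤ) : ℝ)
        ≤ (m j + 1 / 2 + δ) / ((Aw x y w j : ℤ) : ℝ) := fun i j => by
      have hi : (0 : ℝ) < (Aw x y w i : ℤ) := by exact_mod_cast hA i
      have hj : (0 : ℝ) < (Aw x y w j : ℤ) := by exact_mod_cast hA j
      rw [div_le_div_iff₀ hi hj]
      have h1 := h i j
      have e1 : Nw x y m0 w c i j
          = (2 * m i + 1) * Aw x y w j - (2 * m j + 1) * Aw x y w i := by
        rw [← hg]; simp only [Nw, Aw, m]; ring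
      rw [e1] at h1
      push_cast at h1
      linarith
    obtain ⟨i0, -, hi0⟩ := Finset.exists_max_image (Finset.univ : Finset (Fin n))
      (fun i => (m i + 1 / 2 - δ) / ((Aw x y w i : ℤ) : ℝ)) Finset.univ_nonempty
    refine ⟨(m i0 + 1 / 2 - δ) / ((Aw x y w i0 : ℤ) : ℝ), fun i => ⟨m i, ?_⟩⟩
    have h1 := hi0 i (Finset.mem_univ _)
    have h2 := h' i0 i
    have hi : (0 : ℝ) < (Aw x y w i : ℤ) := by exact_mod_cast hA i
    rw [div_le_iff₀ hi] at h1
    rw [le_div_iff₀ hi] at h2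
    rw [abs_le]
    constructor <;> linarith

lemma L3_lemma (K : ℤ) (hK : ∀ i, 1 + |x i| + |y i| ≤ K) (hK0 : 0 < K) (w : Fin 2 → ℕ)
    (hw : Nat.Coprime (w 0) (w 1)) (hA : ∀ i, 0 < Aw x y w i) (D d : ℝ)
    (HU : ∀ δ : ℝ, D ≤ δ ↔ ∃ p q : ℝ, ∀ i, ∃ m : ℤ, |x i * p + y i * q - 1 / 2 - m| ≤ δ)
    (HT : ∀ δ : ℝ, d ≤ δ ↔ ∃ τ : ℝ, ∀ i, ∃ m : ℤ, |τ * (Aw x y w i : ℤ) - 1 / 2 - m| ≤ δ) :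
    D ≤ d ∧ ∀ i j, (d - D) * ((Aw x y w i + Aw x y w j : ℤ) : ℝ) ≤ 2 * K ^ 2 := by
  have hDd : D ≤ d := by
    obtain ⟨τ, h⟩ := (HT d).1 le_rfl
    rw [HU]
    refine ⟨τ * w 0, τ * w 1, fun i => ?_⟩
    obtain ⟨m, hm⟩ := h i
    refine ⟨m, ?_⟩
    convert hm using 2
    simp only [Aw]; push_cast; ring
  refine ⟨hDd, fun i j => ?_⟩
  have hab : (0 : ℝ) < (w 0 : ℝ) + w 1 := by
    have : 0 < w 0 + w 1 := by
      rcases Nat.eq_zero_or_pos (w 0) with h0 | h0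
      · rcases Nat.eq_zero_or_pos (w 1) with h1 | h1
        · rw [h0, h1] at hw; simp at hw
        · omega
      · omega
    exact_mod_cast this
  have hKr : ∀ i, (1 : ℝ) + |(x i : ℝ)| + |(y i : ℝ)| ≤ K := fun i => by exact_mod_cast hK i
  have hK0r : (0 : ℝ) < K := by exact_mod_cast hK0
  have hd : d ≤ D + K / ((w 0 : ℝ) + w 1) := by
    obtain ⟨p, q, h⟩ := (HU D).1 le_rfl
    let s : ℝ := w 0 * q - w 1 * p
    let t : ℝ := Int.fract s / ((w 0 : ℝ) + w 1)
    have ht : t * ((w 0 : ℝ) + w 1) = Int.fract s := by simp only [t]; field_simp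
    have ht0 : 0 ≤ t := by
      have := Int.fract_nonneg s
      positivity
    have ht1 : t ≤ 1 / ((w 0 : ℝ) + w 1) := by
      have := (Int.fract_lt_one s).le
      simp only [t]; gcongr
    obtain ⟨u, v, huv⟩ := bezout _ _ hw
    let g1 : ℤ := -⌊s⌋ * v
    let g2 : ℤ := ⌊s⌋ * u
    have huvr : (u : ℝ) * w 0 + v * w 1 = 1 := by exact_mod_cast huv
    have hfl : (⌊s⌋ : ℝ) = w 0 * q - w 1 * p - t * ((w 0 : ℝ) + w 1) := by
      rw [ht]; simp only [Int.fract, s]; ring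
    have hcol : (w 0 : ℝ) * (q - t - g2) = w 1 * (p + t - g1) := by
      have : (w 0 : ℝ) * g2 - w 1 * g1 = ⌊s⌋ := by
        simp only [g1, g2]; push_cast; linear_combination (⌊s⌋ : ℝ) * huvr
      linear_combination -hfl - this
    let τ : ℝ := u * (p + t - g1) + v * (q - t - g2)
    have hτ0 : τ * w 0 = p + t - g1 := by
      simp only [τ]; linear_combination (p + t - g1) * huvr + v * hcol
    have hτ1 : τ * w 1 = q - t - g2 := by
      simp only [τ]; linear_combination (q - t - g2) * huvr - u * hcol
    rw [HT]
    refine ⟨τ, fun i => ?_⟩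
    obtain ⟨m, hm⟩ := h i
    refine ⟨m - (x i * g1 + y i * g2), ?_⟩
    have e1 : τ * (Aw x y w i : ℤ) - 1 / 2 - ((m - (x i * g1 + y i * g2) : ℤ) : ℝ)
        = (x i * p + y i * q - 1 / 2 - m) + t * (x i - y i) := by
      simp only [Aw]; push_cast
      linear_combination x i * hτ0 + y i * hτ1
    rw [e1]
    refine (abs_add_le _ _).trans (add_le_add hm ?_)
    rw [abs_mul, abs_of_nonneg ht0]
    have h3 : |(x i : ℝ) - y i| ≤ K := by
      have := abs_sub (x i : ℝ) (y i)
      have := hKr i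
      linarith
    calc t * |(x i : ℝ) - y i| ≤ 1 / ((w 0 : ℝ) + w 1) * K := by gcongr
      _ = _ := by ring
  have hAb : ∀ i, ((Aw x y w i : ℤ) : ℝ) ≤ K * ((w 0 : ℝ) + w 1) := fun i => by
    simp only [Aw]; push_cast
    have h1 := hKr i
    have h2 := le_abs_self (x i : ℝ)
    have h3 := le_abs_self (y i : ℝ)
    have h4 := abs_nonneg (x i : ℝ)
    have h5 := abs_nonneg (y i : ℝ)
    have h6 : (x i : ℝ) ≤ K := by linarith
    have h7 : (y i : ℝ) ≤ K := by linarith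
    have h8 : (x i : ℝ) * w 0 ≤ K * w 0 := by gcongr
    have h9 : (y i : ℝ) * w 1 ≤ K * w 1 := by gcongr
    linarith
  have h1 : d - D ≤ K / ((w 0 : ℝ) + w 1) := by linarith
  have hM : ((Aw x y w i + Aw x y w j : ℤ) : ℝ) ≤ 2 * (K * ((w 0 : ℝ) + w 1)) := by
    push_cast; linarith [hAb i, hAb j]
  have hMp : (0 : ℝ) ≤ ((Aw x y w i + Aw x y w j : ℤ) : ℝ) := by
    have := hA i; have := hA j
    exact_mod_cast (by omega : 0 ≤ Aw x y w i + Aw x y w j)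
  calc (d - D) * ((Aw x y w i + Aw x y w j : ℤ) : ℝ)
      ≤ K / ((w 0 : ℝ) + w 1) * (2 * (K * ((w 0 : ℝ) + w 1))) := by gcongr
    _ = 2 * K ^ 2 := by field_simp

theorem core_thm [Nonempty (Fin n)] (D : ℝ) (DT : (Fin 2 → ℕ) → ℝ)
    (HU : ∀ δ : ℝ, D ≤ δ ↔ ∃ p q : ℝ, ∀ i, ∃ m : ℤ, |x i * p + y i * q - 1 / 2 - m| ≤ δ)
    (HT : ∀ w, ∀ δ : ℝ, DT w ≤ δ ↔
      ∃ τ : ℝ, ∀ i, ∃ m : ℤ, |τ * (Aw x y w i : ℤ) - 1 / 2 - m| ≤ δ) :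
    GoodSet D {d | ∃ w : Fin 2 → ℕ, Nat.Coprime (w 0) (w 1) ∧ (∀ i, 0 < Aw x y w i) ∧
      d = DT w} := by
  obtain ⟨A, B, hB, hD⟩ := rational_D x y D HU
  let K : ℤ := 1 + ∑ i, (|x i| + |y i|)
  have hsum : 0 ≤ ∑ i, (|x i| + |y i|) := Finset.sum_nonneg fun i _ => by positivity
  have hK0 : 0 < K := by simp only [K]; omega
  have hK : ∀ i, 1 + |x i| + |y i| ≤ K := fun i => by
    have := Finset.single_le_sum (f := fun i => |x i| + |y i|)
      (fun i _ => by positivity) (Finset.mem_univ i)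
    simp only [K]; linarith
  have hE : 0 ≤ 4 * B * K ^ 2 := by positivity
  refine core_abs x y D DT A B _ (4 * B * K ^ 2).toNat hB hD
    (fun w hw hA => L2_lemma x y K hK w hw hA (DT w) (HT w)) ?_
    (fun w hw hA => (L3_lemma x y K hK hK0 w hw hA D (DT w) HU (HT w)).1)
  intro w hw hA i j
  have h1 := (L3_lemma x y K hK hK0 w hw hA D (DT w) HU (HT w)).2 i j
  have h2 : (((4 * B * K ^ 2).toNat : ℕ) : ℝ) = 4 * B * K ^ 2 := by
    have : (((4 * B * K ^ 2).toNat : ℕ) : ℤ) = 4 * B * K ^ 2 := Int.toNat_of_nonneg hE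
    exact_mod_cast this
  rw [h2]
  have hB' : (0 : ℝ) < B := by exact_mod_cast hB
  calc _ = 2 * B * ((DT w - D) * ((Aw x y w i + Aw x y w j : ℤ) : ℝ)) := by ring
    _ ≤ 2 * B * (2 * K ^ 2) := by gcongr
    _ = _ := by ring

end

lemma circ_dist (a δ : ℝ) : dist (a : AddCircle (1 : ℝ)) ((1 / 2 : ℝ) : AddCircle (1 : ℝ)) ≤ δ ↔
    ∃ m : ℤ, |a - 1 / 2 - m| ≤ δ := by
  rw [dist_eq_norm, ← AddCircle.coe_sub, UnitAddCircle.norm_eq]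
  constructor
  · intro h
    exact ⟨_, h⟩
  · rintro ⟨m, hm⟩
    exact (round_le _ _).trans hm

lemma circ_int (m : ℤ) : ((m : ℝ) : AddCircle (1 : ℝ)) = 0 := by
  rw [AddCircle.coe_eq_zero_iff]
  exact ⟨m, by simp⟩

lemma circ_eq_iff (a b : ℝ) : (a : AddCircle (1 : ℝ)) = b ↔ ∃ m : ℤ, a = b + m := by
  rw [← sub_eq_zero, ← AddCircle.coe_sub, AddCircle.coe_eq_zero_iff]
  constructor
  · rintro ⟨m, hm⟩
    refine ⟨m, ?_⟩
    simp at hm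
    linarith
  · rintro ⟨m, hm⟩
    refine ⟨m, ?_⟩
    simp
    linarith

lemma iSup_eq_dist {n : ℕ} [Nonempty (Fin n)] (p : Torus n) :
    (⨆ i, dist (p i) ((1 / 2 : ℝ) : AddCircle (1 : ℝ)))
      = dist p (fun _ => ((1 / 2 : ℝ) : AddCircle (1 : ℝ))) := by
  apply le_antisymm
  · exact ciSup_le fun i => dist_le_pi_dist p (fun _ => ((1 / 2 : ℝ) : AddCircle (1 : ℝ))) i
  · refine (dist_pi_le_iff (Real.iSup_nonneg fun i => dist_nonneg)).2 fun i => ?_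
    exact le_ciSup (f := fun i => dist (p i) ((1 / 2 : ℝ) : AddCircle (1 : ℝ)))
      (Set.finite_range _).bddAbove i

lemma spanTorus_compact {n k : ℕ} (v : Fin k → Fin n → ℤ) : IsCompact (spanTorus v) := by
  have hc : Continuous fun t : Fin k → ℝ => (torusProj fun i => ∑ j, t j * (v j i : ℝ)) := by
    unfold torusProj
    refine continuous_pi fun i => ?_
    refine (AddCircle.continuous_mk' (1 : ℝ)).comp ?_
    fun_prop
  have : spanTorus v = (fun t : Fin k → ℝ => (torusProj fun i => ∑ j, t j * (v j i : ℝ))) ''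
      (Set.Icc 0 1) := by
    ext p
    constructor
    · rintro ⟨t, rfl⟩
      refine ⟨fun j => Int.fract (t j), ⟨fun j => Int.fract_nonneg _,
        fun j => (Int.fract_lt_one _).le⟩, ?_⟩
      funext i
      simp only [torusProj]
      have : ∑ j, t j * (v j i : ℝ) = ∑ j, Int.fract (t j) * (v j i : ℝ)
          + ((∑ j, ⌊t j⌋ * v j i : ℤ) : ℝ) := by
        push_cast
        rw [← Finset.sum_add_distrib]
        refine Finset.sum_congr rfl fun j _ => ?_
        rw [← add_mul, Int.fract_add_floor]
      rw [this, AddCircle.coe_add, circ_int, add_zero]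
    · rintro ⟨t, -, rfl⟩
      exact ⟨t, rfl⟩
  rw [this]
  exact isCompact_Icc.image hc

lemma DVal_le_iff {n k : ℕ} [Nonempty (Fin n)] (v : Fin k → Fin n → ℤ) (δ : ℝ) :
    DVal (spanTorus v) ≤ δ ↔
      ∃ t : Fin k → ℝ, ∀ i, ∃ m : ℤ, |∑ j, t j * (v j i : ℝ) - 1 / 2 - m| ≤ δ := by
  have h0 : DVal (spanTorus v)
      = sInf ((fun p => dist p (fun _ => ((1 / 2 : ℝ) : AddCircle (1 : ℝ)))) '' spanTorus v) := by
    unfold DVal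
    congr 2
    funext p
    exact iSup_eq_dist p
  have hne : (spanTorus v).Nonempty := ⟨_, 0, rfl⟩
  have hcp : IsCompact ((fun p => dist p (fun _ => ((1 / 2 : ℝ) : AddCircle (1 : ℝ)))) ''
      spanTorus v) := (spanTorus_compact v).image (by fun_prop)
  have key : ∀ t : Fin k → ℝ, dist (torusProj fun i => ∑ j, t j * (v j i : ℝ))
      (fun _ => ((1 / 2 : ℝ) : AddCircle (1 : ℝ))) ≤ δ ↔
        ∀ i, ∃ m : ℤ, |∑ j, t j * (v j i : ℝ) - 1 / 2 - m| ≤ δ := fun t => by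
    rw [dist_pi_le_iff']
    simp only [torusProj, circ_dist]
  constructor
  · intro h
    obtain ⟨p, ⟨t, rfl⟩, hp⟩ := hcp.sInf_mem (hne.image _)
    refine ⟨t, (key t).1 ?_⟩
    dsimp only at hp
    rw [hp, ← h0]
    exact h
  · rintro ⟨t, ht⟩
    rw [h0]
    refine (csInf_le hcp.bddBelow ⟨_, ⟨t, rfl⟩, rfl⟩).trans ((key t).2 ht)

def tv {n : ℕ} (v : Fin 2 → Fin n → ℤ) (a b : ℤ) : Fin 1 → Fin n → ℤ :=
  fun _ i => a * v 0 i + b * v 1 i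

lemma tv_good {n : ℕ} [Nonempty (Fin n)] (v : Fin 2 → Fin n → ℤ) (a b : ℤ)
    (h : ∀ i, a * v 0 i + b * v 1 i ≠ 0) :
    IsSubtorus 1 (spanTorus (tv v a b)) ∧ IsProperSub (spanTorus (tv v a b)) ∧
      spanTorus (tv v a b) ⊆ spanTorus v := by
  refine ⟨⟨_, ?_, rfl⟩, ?_, ?_⟩
  · rw [linearIndependent_unique_iff]
    intro h0
    have i := Classical.arbitrary (Fin n)
    have := congrFun h0 i
    simp only [tv, Pi.zero_apply] at this
    exact h i (by exact_mod_cast this)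
  · intro hs
    have hp : 0 < 1 + ∑ i, |((a * v 0 i + b * v 1 i : ℤ) : ℝ)| := by
      have : 0 ≤ ∑ i, |((a * v 0 i + b * v 1 i : ℤ) : ℝ)| :=
        Finset.sum_nonneg fun i _ => abs_nonneg _
      linarith
    have hm := hs ⟨fun _ => (1 + ∑ i, |((a * v 0 i + b * v 1 i : ℤ) : ℝ)|)⁻¹, rfl⟩
    rw [Set.mem_iUnion] at hm
    obtain ⟨i, hi⟩ := hm
    change ((_ : ℝ) : AddCircle (1 : ℝ)) = 0 at hi
    rw [AddCircle.coe_eq_zero_iff] at hi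
    obtain ⟨m, hm⟩ := hi
    simp only [Finset.univ_unique, Finset.sum_singleton, tv, zsmul_eq_mul, mul_one] at hm
    have hle : |((a * v 0 i + b * v 1 i : ℤ) : ℝ)|
        < 1 + ∑ i, |((a * v 0 i + b * v 1 i : ℤ) : ℝ)| := by
      have := Finset.single_le_sum (f := fun i => |((a * v 0 i + b * v 1 i : ℤ) : ℝ)|)
        (fun i _ => abs_nonneg _) (Finset.mem_univ i)
      linarith
    have hne : ((a * v 0 i + b * v 1 i : ℤ) : ℝ) ≠ 0 := by exact_mod_cast h i
    generalize (1 + ∑ i, |((a * v 0 i + b * v 1 i : ℤ) : ℝ)|) = Z at *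
    generalize ((a * v 0 i + b * v 1 i : ℤ) : ℝ) = Y at *
    have hY : Y = m * Z := by rw [hm]; field_simp
    rw [hY, abs_mul, abs_of_pos hp] at hle
    have h1 : |(m : ℝ)| < 1 := by nlinarith
    have h2 : |m| < 1 := by exact_mod_cast h1
    have h3 : m = 0 := Int.abs_lt_one_iff.1 h2
    rw [h3] at hY
    simp at hY
    exact hne hY
  · rintro p ⟨t, rfl⟩
    refine ⟨![t 0 * a, t 0 * b], ?_⟩
    congr 1
    funext i
    simp [tv, Fin.sum_univ_two]
    ring

lemma mem_span_of_sub {n : ℕ} (v : Fin 2 → Fin n → ℤ) (t : Fin 1 → Fin n → ℤ)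
    (h : spanTorus t ⊆ spanTorus v) : ∃ p q : ℝ, ∀ i, (t 0 i : ℝ) = p * v 0 i + q * v 1 i := by
  let V : Submodule ℝ (Fin n → ℝ) :=
    Submodule.span ℝ {(fun i => (v 0 i : ℝ)), (fun i => (v 1 i : ℝ))}
  by_cases hmem : (fun i => (t 0 i : ℝ)) ∈ V
  · obtain ⟨p, q, hpq⟩ := Submodule.mem_span_pair.1 hmem
    refine ⟨p, q, fun i => ?_⟩
    have := congrFun hpq i
    simp at this
    exact this.symm
  · exfalso
    obtain ⟨g, hg1, hg2⟩ := Submodule.exists_le_ker_of_notMem hmem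
    have hv0 : g (fun i => (v 0 i : ℝ)) = 0 := hg2 (Submodule.subset_span (by simp))
    have hv1 : g (fun i => (v 1 i : ℝ)) = 0 := hg2 (Submodule.subset_span (by simp))
    have hsur : Set.range (fun z : Fin n → ℤ => g (fun i => (z i : ℝ)) / g (fun i => (t 0 i : ℝ)))
        = Set.univ := by
      rw [Set.eq_univ_iff_forall]
      intro τ
      obtain ⟨s, hs⟩ := h ⟨fun _ => τ, rfl⟩
      have h1 : ∀ i, ∃ m : ℤ, τ * t 0 i = s 0 * v 0 i + s 1 * v 1 i + m := fun i => by
        have := congrFun hs i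
        simp only [torusProj, Finset.univ_unique, Finset.sum_singleton, Fin.sum_univ_two] at this
        exact (circ_eq_iff _ _).1 this
      choose z hz using h1
      refine ⟨z, ?_⟩
      dsimp only
      rw [div_eq_iff hg1]
      have e1 : (fun i => (z i : ℝ)) = τ • (fun i => (t 0 i : ℝ)) - s 0 • (fun i => (v 0 i : ℝ))
          - s 1 • (fun i => (v 1 i : ℝ)) := by
        funext i
        simp only [Pi.sub_apply, Pi.smul_apply, smul_eq_mul]
        linarith [hz i]
      rw [e1, map_sub, map_sub, map_smul, map_smul, map_smul, hv0, hv1]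
      simp
    have hc := Set.countable_range
      (fun z : Fin n → ℤ => g (fun i => (z i : ℝ)) / g (fun i => (t 0 i : ℝ)))
    rw [hsur] at hc
    exact Set.not_countable_univ hc

lemma sub_struct {n : ℕ} (v : Fin 2 → Fin n → ℤ) (T : Set (Torus n)) (hT : IsSubtorus 1 T)
    (hTp : IsProperSub T) (hTU : T ⊆ spanTorus v) :
    ∃ a b : ℤ, Int.gcd a b = 1 ∧ (∀ i, a * v 0 i + b * v 1 i ≠ 0) ∧ T = spanTorus (tv v a b) := by
  obtain ⟨t, hli, rfl⟩ := hT
  obtain ⟨p, q, hpq⟩ := mem_span_of_sub v t hTU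
  obtain ⟨φ, hφ⟩ := exists_phi
  have hφz : ∀ (z : ℤ) (r : ℝ), φ (r * z) = φ r * z := fun z r => by
    have := φ.map_smul (z : ℚ) r
    rw [Rat.smul_def] at this
    rw [mul_comm r, mul_comm (φ r)]
    simpa using this
  have hφ1 : ∀ (z : ℤ), φ (z : ℝ) = z := fun z => by
    have := hφz z 1
    rw [hφ] at this
    simpa using this
  have hPQ : ∀ i, (t 0 i : ℚ) = φ p * v 0 i + φ q * v 1 i := fun i => by
    have := congrArg φ (hpq i)
    rwa [map_add, hφz, hφz, hφ1] at this
  obtain ⟨P, hP⟩ : ∃ P, P = φ p := ⟨_, rfl⟩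
  obtain ⟨Q, hQ⟩ : ∃ Q, Q = φ q := ⟨_, rfl⟩
  rw [← hP, ← hQ] at hPQ
  have ht0 : ∃ i, t 0 i ≠ 0 := by
    by_contra hc
    push Not at hc
    rw [linearIndependent_unique_iff] at hli
    apply hli
    funext i
    have := hc i
    simpa using this
  -- scaling
  obtain ⟨r, a, b, hr, hab, hPa, hQb⟩ : ∃ (r : ℚ) (a b : ℤ), r ≠ 0 ∧ Int.gcd a b = 1 ∧
      P = r * a ∧ Q = r * b := by
    let P' : ℤ := P.num * Q.den
    let Q' : ℤ := Q.num * P.den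
    have hPd : (P.den : ℚ) ≠ 0 := by exact_mod_cast P.den_nz
    have hQd : (Q.den : ℚ) ≠ 0 := by exact_mod_cast Q.den_nz
    have e1 : P = (P' : ℚ) / (P.den * Q.den) := by
      simp only [P']; push_cast
      have := Rat.num_div_den P
      rw [mul_div_mul_right _ _ hQd]
      exact this.symm
    have e2 : Q = (Q' : ℚ) / (P.den * Q.den) := by
      simp only [Q']; push_cast
      have := Rat.num_div_den Q
      rw [mul_comm (P.den : ℚ), mul_div_mul_right _ _ hPd]
      exact this.symm
    have hg : 0 < Int.gcd P' Q' := by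
      rw [Int.gcd_pos_iff]
      by_contra hc
      push Not at hc
      obtain ⟨i, hi⟩ := ht0
      apply hi
      have := hPQ i
      rw [e1, e2, hc.1, hc.2] at this
      simpa using this
    obtain ⟨a, b, hab, ha, hb⟩ := Int.exists_gcd_one hg
    refine ⟨(Int.gcd P' Q' : ℚ) / (P.den * Q.den), a, b, ?_, hab, ?_, ?_⟩
    · have : (Int.gcd P' Q' : ℚ) ≠ 0 := by exact_mod_cast hg.ne'
      positivity
    · rw [e1]
      have : (P' : ℚ) = a * (Int.gcd P' Q' : ℚ) := by exact_mod_cast ha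
      rw [← e1]
      conv_lhs => rw [e1, this]
      ring
    · have : (Q' : ℚ) = b * (Int.gcd P' Q' : ℚ) := by exact_mod_cast hb
      conv_lhs => rw [e2, this]
      ring
  have htab : ∀ i, (t 0 i : ℝ) = r * ((a * v 0 i + b * v 1 i : ℤ) : ℝ) := fun i => by
    have : (t 0 i : ℚ) = r * ((a * v 0 i + b * v 1 i : ℤ) : ℚ) := by
      rw [hPQ i, hPa, hQb]; push_cast; ring
    exact_mod_cast this
  have hrr : (r : ℝ) ≠ 0 := by exact_mod_cast hr
  refine ⟨a, b, hab, fun i h0 => ?_, ?_⟩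
  · apply hTp
    rintro x ⟨τ, rfl⟩
    refine Set.mem_iUnion.2 ⟨i, ?_⟩
    have : (t 0 i : ℝ) = 0 := by rw [htab, h0]; simp
    simp [torusProj, this]
  · ext x
    constructor
    · rintro ⟨τ, rfl⟩
      refine ⟨fun _ => τ 0 * r, ?_⟩
      congr 1
      funext i
      simp only [Finset.univ_unique, Finset.sum_singleton, tv]
      have := htab i
      simp only [Fin.default_eq_zero]
      rw [this]; ring
    · rintro ⟨τ, rfl⟩
      refine ⟨fun _ => τ 0 / r, ?_⟩
      congr 1
      funext i
      simp only [Finset.univ_unique, Finset.sum_singleton, tv]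
      have := htab i
      simp only [Fin.default_eq_zero]
      rw [this]; field_simp

lemma sign_inv (s : ℤˣ) (r δ : ℝ) :
    (∃ m : ℤ, |((s : ℤ) : ℝ) * r - 1 / 2 - m| ≤ δ) ↔ ∃ m : ℤ, |r - 1 / 2 - m| ≤ δ := by
  rcases Int.units_eq_one_or s with rfl | rfl
  · simp
  · constructor
    · rintro ⟨m, hm⟩
      refine ⟨-1 - m, ?_⟩
      rw [abs_sub_comm] at hm
      convert hm using 2
      push_cast; ring
    · rintro ⟨m, hm⟩
      refine ⟨-1 - m, ?_⟩
      rw [abs_sub_comm] at hm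
      convert hm using 2
      push_cast; ring

lemma unit_sq (s : ℤˣ) : ((s : ℤ) : ℝ) * ((s : ℤ) : ℝ) = 1 := by
  rcases Int.units_eq_one_or s with rfl | rfl <;> simp

lemma unit_natAbs (a : ℤ) : ∃ s : ℤˣ, a = (s : ℤ) * (a.natAbs : ℤ) := by
  rcases Int.natAbs_eq a with h | h
  · exact ⟨1, by simpa using h⟩
  · exact ⟨-1, by simpa using h⟩

lemma unit_pos (a : ℤ) (h : a ≠ 0) : ∃ s : ℤˣ, 0 < (s : ℤ) * a := by
  rcases lt_or_gt_of_ne h with h | h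
  · exact ⟨-1, by simpa using h⟩
  · exact ⟨1, by simpa using h⟩

theorem main_good {n : ℕ} [Nonempty (Fin n)] (v : Fin 2 → Fin n → ℤ) :
    GoodSet (DVal (spanTorus v)) (relSpec1 (spanTorus v)) := by
  let X : (ℤˣ × ℤˣ) × (Fin n → ℤˣ) → Fin n → ℤ := fun σ i => (σ.2 i : ℤ) * ((σ.1.1 : ℤ) * v 0 i)
  let Y : (ℤˣ × ℤˣ) × (Fin n → ℤˣ) → Fin n → ℤ := fun σ i => (σ.2 i : ℤ) * ((σ.1.2 : ℤ) * v 1 i)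
  let DT : (ℤˣ × ℤˣ) × (Fin n → ℤˣ) → (Fin 2 → ℕ) → ℝ := fun σ w =>
    DVal (spanTorus (tv v ((σ.1.1 : ℤ) * w 0) ((σ.1.2 : ℤ) * w 1)))
  have hAw : ∀ σ w i, Aw (X σ) (Y σ) w i
      = (σ.2 i : ℤ) * ((σ.1.1 : ℤ) * w 0 * v 0 i + (σ.1.2 : ℤ) * w 1 * v 1 i) := fun σ w i => by
    simp only [Aw, X, Y]; ring
  have hun : relSpec1 (spanTorus v) = ⋃ σ : (ℤˣ × ℤˣ) × (Fin n → ℤˣ),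
      {d | ∃ w : Fin 2 → ℕ, Nat.Coprime (w 0) (w 1) ∧ (∀ i, 0 < Aw (X σ) (Y σ) w i) ∧
        d = DT σ w} := by
    ext d
    rw [Set.mem_iUnion]
    constructor
    · rintro ⟨T, hT, hTp, hTU, rfl⟩
      obtain ⟨a, b, hab, hne, rfl⟩ := sub_struct v T hT hTp hTU
      obtain ⟨s1, hs1⟩ := unit_natAbs a
      obtain ⟨s2, hs2⟩ := unit_natAbs b
      have : ∀ i, ∃ s : ℤˣ, 0 < (s : ℤ) * (a * v 0 i + b * v 1 i) := fun i => unit_pos _ (hne i)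
      choose s hs using this
      refine ⟨((s1, s2), s), ![a.natAbs, b.natAbs], ?_, ?_, ?_⟩
      · simpa [Int.gcd] using hab
      · intro i
        rw [hAw]
        have := hs i
        simp only [Matrix.cons_val_zero, Matrix.cons_val_one]
        rw [← hs1, ← hs2]
        exact this
      · simp only [DT, Matrix.cons_val_zero, Matrix.cons_val_one]
        rw [← hs1, ← hs2]
    · rintro ⟨σ, w, hw, hpos, rfl⟩
      have hne : ∀ i, (σ.1.1 : ℤ) * w 0 * v 0 i + (σ.1.2 : ℤ) * w 1 * v 1 i ≠ 0 := fun i h0 => by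
        have := hpos i
        rw [hAw, h0] at this
        simp at this
      obtain ⟨h1, h2, h3⟩ := tv_good v ((σ.1.1 : ℤ) * w 0) ((σ.1.2 : ℤ) * w 1) hne
      exact ⟨_, h1, h2, h3, rfl⟩
  rw [hun]
  refine GoodSet.iUnion fun σ => core_thm (X σ) (Y σ) _ (DT σ) ?_ ?_
  · intro δ
    rw [DVal_le_iff]
    constructor
    · rintro ⟨t, h⟩
      refine ⟨((σ.1.1 : ℤ) : ℝ) * t 0, ((σ.1.2 : ℤ) : ℝ) * t 1, fun i => ?_⟩
      obtain ⟨m, hm⟩ := (sign_inv (σ.2 i) _ _).2 (h i)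
      refine ⟨m, ?_⟩
      convert hm using 4
      simp only [X, Y, Fin.sum_univ_two]
      push_cast
      linear_combination ((σ.2 i : ℤ) : ℝ) * v 0 i * t 0 * unit_sq σ.1.1
        + ((σ.2 i : ℤ) : ℝ) * v 1 i * t 1 * unit_sq σ.1.2
    · rintro ⟨p, q, h⟩
      refine ⟨![((σ.1.1 : ℤ) : ℝ) * p, ((σ.1.2 : ℤ) : ℝ) * q], fun i => ?_⟩
      rw [← sign_inv (σ.2 i)]
      obtain ⟨m, hm⟩ := h i
      refine ⟨m, ?_⟩
      convert hm using 4
      simp only [X, Y, Fin.sum_univ_two, Matrix.cons_val_zero, Matrix.cons_val_one]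
      push_cast
      ring
  · intro w δ
    simp only [DT]
    rw [DVal_le_iff]
    constructor
    · rintro ⟨t, h⟩
      refine ⟨t 0, fun i => ?_⟩
      obtain ⟨m, hm⟩ := (sign_inv (σ.2 i) _ _).2 (h i)
      refine ⟨m, ?_⟩
      convert hm using 4
      rw [hAw]
      simp only [Finset.univ_unique, Finset.sum_singleton, tv, Fin.default_eq_zero]
      push_cast; ring
    · rintro ⟨τ, h⟩
      refine ⟨fun _ => τ, fun i => ?_⟩
      rw [← sign_inv (σ.2 i)]
      obtain ⟨m, hm⟩ := h i
      refine ⟨m, ?_⟩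
      convert hm using 4
      rw [hAw]
      simp only [Finset.univ_unique, Finset.sum_singleton, tv]
      push_cast; ring

/-- **Theorem (structure of relative spectra of 2-dimensional subtori).** -/
theorem stmt0 (n : ℕ) (hn : 2 ≤ n) (U : Set (Torus n))
    (hU : IsSubtorus 2 U) (hUproper : IsProperSub U) :
    ∃ (N : ℕ) (α β : Fin N → ℚ),
      (∀ i, 0 < α i) ∧ (∀ i, 0 < β i) ∧
      (symmDiff (relSpec1 U) (⋃ i : Fin N, progSet (DVal U) (α i) (β i))).Finite := by
  have : Nonempty (Fin n) := ⟨⟨0, by omega⟩⟩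
  obtain ⟨v, -, rfl⟩ := hU
  exact (main_good v).final
end
end

section
/- Let n ≥ 2 be a natural number and let U ⊆ (ℝ/ℤ)^n be a 2-dimensional proper subtorus. Then there exist N ∈ ℤ_{≥0} and positive rational numbers α₁,…,α_N, β₁,…,β_N such that only finitely many 1-dimensional proper subtori T of (ℝ/ℤ)^n contained in U have D(T) lying outside the set {D(U)} ∪ ⋃_{i=1}^N { D(U) + 1/(αᵢ·s + βᵢ) : s ∈ ℤ, s ≥ 0 }. -/
noncomputable section

lemma active_exists {n : ℕ} (u g : Fin n → ℝ) (r0 : ℝ) (hg : ∀ i, g i ≠ 0)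
    (hu : ∀ i, |u i| ≤ r0)
    (hmin : ∀ ε r : ℝ, (∀ i, |u i + ε * g i| ≤ r) → r0 ≤ r) :
    ∃ (i : Fin n) (σ : ℤ), (σ = 1 ∨ σ = -1) ∧ (σ : ℝ) * u i = r0 ∧ 0 < (σ : ℝ) * g i := by
  by_contra hcon
  push Not at hcon
  have key : ∀ i, ∀ σ : ℤ, (σ = 1 ∨ σ = -1) →
      ∀ᶠ ε in nhdsWithin (0 : ℝ) (Set.Ioi 0), (σ : ℝ) * (u i + ε * g i) < r0 := by
    intro i σ hσ
    have h1 : (σ : ℝ) * u i ≤ r0 := by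
      have := abs_le.1 (hu i)
      rcases hσ with rfl | rfl <;> push_cast <;> linarith
    rcases h1.lt_or_eq with h | h
    · have hc : ContinuousAt (fun ε : ℝ => (σ : ℝ) * (u i + ε * g i)) 0 := by fun_prop
      have : ∀ᶠ ε in nhds (0 : ℝ), (σ : ℝ) * (u i + ε * g i) < r0 :=
        hc.eventually_lt continuousAt_const (by simpa using h)
      exact this.filter_mono nhdsWithin_le_nhds
    · have h2 := hcon i σ hσ h
      have h3 : (σ : ℝ) * g i < 0 := by
        refine lt_of_le_of_ne h2 (mul_ne_zero ?_ (hg i))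
        rcases hσ with rfl | rfl <;> norm_num
      filter_upwards [self_mem_nhdsWithin] with ε hε
      have : 0 < ε := hε
      nlinarith
  have hall : ∀ᶠ ε in nhdsWithin (0 : ℝ) (Set.Ioi 0), ∀ i, |u i + ε * g i| < r0 := by
    rw [Filter.eventually_all]
    intro i
    filter_upwards [key i 1 (Or.inl rfl), key i (-1) (Or.inr rfl)] with ε h1 h2
    push_cast at h1 h2
    rw [abs_lt]; constructor <;> linarith
  obtain ⟨ε, hε⟩ := hall.exists
  have hr : ∀ᶠ r in nhdsWithin r0 (Set.Iio r0), ∀ i, |u i + ε * g i| ≤ r := by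
    rw [Filter.eventually_all]
    intro i
    have : ∀ᶠ r in nhds r0, |u i + ε * g i| ≤ r := Filter.Eventually.mono (lt_mem_nhds (hε i)) fun _ h => h.le
    exact this.filter_mono nhdsWithin_le_nhds
  obtain ⟨r, h1, h2⟩ := (hr.and self_mem_nhdsWithin).exists
  have := hmin ε r h1
  have h3 : r < r0 := h2
  linarith

def Good {n : ℕ} (a b : Fin n → ℤ) (s t r : ℝ) : Prop :=
  ∃ m : Fin n → ℤ, ∀ i, |s * a i + t * b i - 1 / 2 - m i| ≤ r

lemma lat_of_root (K : ℕ) (U V : ℤ) (r : ℝ) (hU : U ≠ 0) (hK : |U| ≤ K)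
    (h : (U : ℝ) * r = V) : ∃ z : ℤ, (K.factorial : ℝ) * r = z := by
  have h1 : U.natAbs ∣ K.factorial := Nat.dvd_factorial (by omega) (by
    rw [Int.abs_eq_natAbs] at hK; exact_mod_cast hK)
  have h2 : U ∣ (K.factorial : ℤ) := by
    rw [← Int.natAbs_dvd]; exact_mod_cast h1
  obtain ⟨c, hc⟩ := h2
  refine ⟨c * V, ?_⟩
  have : (K.factorial : ℝ) = U * c := by exact_mod_cast hc
  rw [this]; push_cast; rw [← h]; ring

lemma abs_sub_mul_le (H : ℤ) (p q r s : ℤ) (hp : |p| ≤ H) (hq : |q| ≤ H) (hr : |r| ≤ H)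
    (hs : |s| ≤ H) : |p * q - r * s| ≤ 2 * H ^ 2 := by
  have h1 : |p * q| ≤ H * H := by rw [abs_mul]; gcongr; exact (abs_nonneg _).trans hp
  have h2 : |r * s| ≤ H * H := by rw [abs_mul]; gcongr; exact (abs_nonneg _).trans hr
  have := abs_sub (p * q) (r * s)
  nlinarith

lemma sgn_abs (σ z : ℤ) (h : σ = 1 ∨ σ = -1) : |σ * z| = |z| := by
  rcases h with rfl | rfl <;> simp

set_option maxHeartbeats 2000000 in
lemma core {n : ℕ} (a b : Fin n → ℤ) (H : ℕ) (hH : 1 ≤ H) (ha : ∀ i, |a i| ≤ H) (hb : ∀ i, |b i| ≤ H)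
    (d : ℝ) (hd : ∀ s t r, Good a b s t r → d ≤ r) :
    ∃ Q M : ℕ, 0 < Q ∧ 0 < M ∧ ∀ x y : ℤ, (∀ i, (x * a i + y * b i : ℤ) ≠ 0) → ∀ τ r0 : ℝ,
      Good a b (τ * x) (τ * y) r0 →
      (∀ (s t r : ℝ) (k : ℤ), x * t - y * s = k → Good a b s t r → r0 ≤ r) →
      d < r0 → (Q : ℝ) * r0 < ⌊(Q : ℝ) * d⌋ + 1 →
      ∃ s : ℕ, 1 / (r0 - d) = ((s : ℝ) + 1) / M := by
  set K : ℕ := 12 * H ^ 2 with hKdef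
  have hKz : (K : ℤ) = 12 * (H : ℤ) ^ 2 := by simp [hKdef]
  have hHz : (1 : ℤ) ≤ H := by exact_mod_cast hH
  set Q : ℕ := K.factorial with hQdef
  have hQ : 0 < Q := Nat.factorial_pos _
  refine ⟨Q, (4 * H ^ 2 * Q).factorial, hQ, Nat.factorial_pos _, ?_⟩
  intro x y hxy τ r0 hgood hmin hdr hr0
  have hQr : (0 : ℝ) < Q := by exact_mod_cast hQ
  set f : ℤ := ⌊(Q : ℝ) * d⌋ with hf
  have hfd : (f : ℝ) ≤ Q * d := Int.floor_le _
  set d' : ℝ := f / Q with hd'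
  have hQd' : (Q : ℝ) * d' = f := by rw [hd']; field_simp
  have hd'd : d' ≤ d := by
    have : (Q : ℝ) * d' ≤ Q * d := by rw [hQd']; exact hfd
    exact le_of_mul_le_mul_left this hQr
  have disc : ∀ (U V : ℤ) (r : ℝ), U ≠ 0 → |U| ≤ K → (U : ℝ) * r = V → d' < r → r ≤ r0 → False := by
    intro U V r hU hUK h h1 h2
    obtain ⟨z, hz⟩ := lat_of_root K U V r hU hUK h
    have h3 : (Q : ℝ) * d' < Q * r := by gcongr
    have h4 : (Q : ℝ) * r ≤ Q * r0 := by gcongr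
    rw [hQd', hz] at h3
    rw [hz] at h4
    have h5 : (z : ℝ) < f + 1 := by linarith
    have h6 : f < z := by exact_mod_cast h3
    have h7 : z < f + 1 := by exact_mod_cast h5
    omega
  obtain ⟨m, hm⟩ := hgood
  set s0 := τ * x with hs0
  set t0 := τ * y with ht0
  have hg : ∀ i, ((x * a i + y * b i : ℤ) : ℝ) ≠ 0 := fun i => by exact_mod_cast hxy i
  have mv : ∀ ε r : ℝ, (∀ i, |(s0 * a i + t0 * b i - 1 / 2 - m i) + ε * ((x * a i + y * b i : ℤ) : ℝ)| ≤ r) → r0 ≤ r := by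
    intro ε r h
    refine hmin (s0 + ε * x) (t0 + ε * y) r 0 ?_ ⟨m, fun i => ?_⟩
    · rw [hs0, ht0]; push_cast; ring
    · have := h i
      push_cast at this
      convert this using 2
      ring
  obtain ⟨i, σ, hσ, hi1, hi2⟩ := active_exists _ _ r0 hg hm mv
  obtain ⟨j, ρ, hρ, hj1, hj2⟩ := active_exists (fun i => (s0 * a i + t0 * b i - 1 / 2 - m i))
    (fun i => -((x * a i + y * b i : ℤ) : ℝ)) r0 (fun i => neg_ne_zero.2 (hg i)) hm (by
      intro ε r h
      refine mv (-ε) r fun i => ?_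
      have := h i
      convert this using 2
      ring)
  obtain ⟨A, hA⟩ : ∃ A, A = σ * a i := ⟨_, rfl⟩
  obtain ⟨B, hB⟩ : ∃ A, A = σ * b i := ⟨_, rfl⟩
  obtain ⟨e, he⟩ : ∃ A, A = σ * (1 + 2 * m i) := ⟨_, rfl⟩
  obtain ⟨A', hA'⟩ : ∃ A, A = ρ * a j := ⟨_, rfl⟩
  obtain ⟨B', hB'⟩ : ∃ A, A = ρ * b j := ⟨_, rfl⟩
  obtain ⟨e', he'⟩ : ∃ A, A = ρ * (1 + 2 * m j) := ⟨_, rfl⟩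
  have bA : |A| ≤ H := by rw [hA, sgn_abs _ _ hσ]; exact ha i
  have bB : |B| ≤ H := by rw [hB, sgn_abs _ _ hσ]; exact hb i
  have bA' : |A'| ≤ H := by rw [hA', sgn_abs _ _ hρ]; exact ha j
  have bB' : |B'| ≤ H := by rw [hB', sgn_abs _ _ hρ]; exact hb j
  have E1 : (A : ℝ) * s0 + B * t0 = e / 2 + r0 := by
    rw [← hi1, hA, hB, he]; push_cast; ring
  have E2 : (A' : ℝ) * s0 + B' * t0 = e' / 2 + r0 := by
    rw [← hj1, hA', hB', he']; push_cast; ring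
  have S1 : 0 < A * x + B * y := by
    have : (0 : ℝ) < ((A * x + B * y : ℤ) : ℝ) := by
      calc (0 : ℝ) < _ := hi2
        _ = _ := by rw [hA, hB]; push_cast; ring
    exact_mod_cast this
  have S2 : A' * x + B' * y < 0 := by
    have : (0 : ℝ) < ((-(A' * x + B' * y) : ℤ) : ℝ) := by
      calc (0 : ℝ) < _ := hj2
        _ = _ := by rw [hA', hB']; push_cast; ring
    have : 0 < -(A' * x + B' * y) := by exact_mod_cast this
    omega
  have hd'r : d' < r0 := lt_of_le_of_lt hd'd hdr
  clear_value s0 t0 f d'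
  obtain ⟨Δ, hΔ⟩ : ∃ D, D = A * B' - A' * B := ⟨_, rfl⟩
  have bΔ : |Δ| ≤ 2 * (H : ℤ) ^ 2 := by rw [hΔ]; exact abs_sub_mul_le H _ _ _ _ bA bB' bA' bB
  have bAA : |A - A'| ≤ 2 * H := (abs_sub A A').trans (by linarith)
  have bBB : |B' - B| ≤ 2 * H := (abs_sub B' B).trans (by linarith)
  by_cases hΔ0 : Δ = 0
  · exfalso
    have hD : (A : ℝ) * B' - A' * B = 0 := by
      have : ((A * B' - A' * B : ℤ) : ℝ) = 0 := by rw [← hΔ, hΔ0]; simp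
      exact_mod_cast this
    by_cases hAA : A = A'
    · have hBB : B' ≠ B := by
        rintro rfl; subst hAA; linarith
      refine disc (2 * (B' - B)) (B * e' - B' * e) r0 ?_ ?_ ?_ hd'r le_rfl
      · intro h; apply hBB; omega
      · rw [abs_mul, hKz]; norm_num; nlinarith
      · push_cast
        linear_combination (2 * B : ℝ) * E2 - 2 * B' * E1 + 2 * s0 * hD
    · refine disc (2 * (A - A')) (A' * e - A * e') r0 ?_ ?_ ?_ hd'r le_rfl
      · intro h; apply hAA; omega
      · rw [abs_mul, hKz]; norm_num; nlinarith
      · push_cast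
        linear_combination (-2 * A : ℝ) * E2 + 2 * A' * E1 + 2 * t0 * hD
  · have hΔr : (Δ : ℝ) ≠ 0 := by exact_mod_cast hΔ0
    have hD : (Δ : ℝ) = A * B' - A' * B := by rw [hΔ]; push_cast; ring
    obtain ⟨s, hs⟩ : ∃ s : ℝ → ℝ, s = fun r => (((e : ℝ) * B' - e' * B) + 2 * r * (B' - B)) / (2 * Δ) := ⟨_, rfl⟩
    obtain ⟨t, ht⟩ : ∃ t : ℝ → ℝ, t = fun r => (((A : ℝ) * e' - A' * e) + 2 * r * (A - A')) / (2 * Δ) := ⟨_, rfl⟩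
    have hsr0 : s r0 = s0 := by
      rw [hs]; simp only; rw [div_eq_iff (by positivity)]
      linear_combination 2 * s0 * (-hD) - 2 * B' * E1 + 2 * B * E2
    have htr0 : t r0 = t0 := by
      rw [ht]; simp only; rw [div_eq_iff (by positivity)]
      linear_combination 2 * t0 * (-hD) - 2 * A * E2 + 2 * A' * E1
    have hsaff : ∀ r, 2 * Δ * s r = (e * B' - e' * B) + 2 * r * (B' - B) := by
      intro r; rw [hs]; simp only; field_simp
    have htaff : ∀ r, 2 * Δ * t r = (A * e' - A' * e) + 2 * r * (A - A') := by
      intro r; rw [ht]; simp only; field_simp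
    have con : ∀ l, ∀ ω : ℤ, (ω = 1 ∨ ω = -1) →
        (ω : ℝ) * (s d' * a l + t d' * b l - 1 / 2 - m l) ≤ d' := by
      intro l ω hω
      by_contra hlt
      push Not at hlt
      have h0 : (ω : ℝ) * (s r0 * a l + t r0 * b l - 1 / 2 - m l) ≤ r0 := by
        rw [hsr0, htr0]
        have := abs_le.1 (hm l)
        rcases hω with rfl | rfl <;> push_cast <;> linarith
      obtain ⟨U, hU⟩ : ∃ U : ℤ, U = 2 * Δ - 2 * (ω * ((B' - B) * a l - (A' - A) * b l)) := ⟨_, rfl⟩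
      obtain ⟨V, hV⟩ : ∃ V : ℤ, V = ω * ((e * B' - e' * B) * a l + (A * e' - A' * e) * b l - Δ - 2 * Δ * m l) := ⟨_, rfl⟩
      have hg : ∀ r, 2 * Δ * (r - (ω : ℝ) * (s r * a l + t r * b l - 1 / 2 - m l)) = U * r - V := by
        intro r
        rw [hU, hV]; push_cast
        linear_combination (-ω * a l : ℝ) * hsaff r - ω * b l * htaff r
      have hUb : |U| ≤ K := by
        have h1 : |(B' - B) * a l - (A' - A) * b l| ≤ 2 * (H : ℤ) * H + 2 * H * H := by
          refine (abs_sub _ _).trans ?_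
          rw [abs_mul, abs_mul]
          gcongr
          · exact ha l
          · rw [abs_sub_comm]; exact bAA
          · exact hb l
        have h2 := abs_sub (2 * Δ) (2 * (ω * ((B' - B) * a l - (A' - A) * b l)))
        rw [abs_mul, abs_mul 2 (ω * _), sgn_abs _ _ hω] at h2
        rw [hU, hKz]
        norm_num at h2
        nlinarith
      have hgd := hg d'
      have hgr := hg r0
      obtain ⟨p, hp⟩ : ∃ p, p = d' - (ω : ℝ) * (s d' * a l + t d' * b l - 1 / 2 - m l) := ⟨_, rfl⟩
      obtain ⟨q, hq⟩ : ∃ p, p = r0 - (ω : ℝ) * (s r0 * a l + t r0 * b l - 1 / 2 - m l) := ⟨_, rfl⟩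
      rw [← hp] at hgd
      rw [← hq] at hgr
      have hp0 : p < 0 := by linarith
      have hq0 : 0 ≤ q := by linarith
      have hdiff : (U : ℝ) * (r0 - d') = 2 * Δ * (q - p) := by linarith
      have hU0 : U ≠ 0 := by
        rintro h
        rw [h] at hdiff
        have : (2 * (Δ : ℝ)) * (q - p) ≠ 0 := mul_ne_zero (by positivity) (by linarith)
        apply this; rw [← hdiff]; simp
      have hU0r : (U : ℝ) ≠ 0 := by exact_mod_cast hU0
      have hroot : (V : ℝ) / U = d' + (-p) / (q - p) * (r0 - d') := by
        have hqp : q - p ≠ 0 := by linarith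
        rw [div_eq_iff hU0r]
        have : (U : ℝ) * ((-p) / (q - p) * (r0 - d')) = 2 * Δ * (-p) := by
          calc _ = (-p) / (q - p) * (U * (r0 - d')) := by ring
            _ = _ := by rw [hdiff]; field_simp
        linarith
      have hpos : 0 < -p / (q - p) := div_pos (by linarith) (by linarith)
      have hle1 : -p / (q - p) ≤ 1 := by rw [div_le_one (by linarith)]; linarith
      refine disc U V (V / U) hU0 hUb (by field_simp) ?_ ?_
      · rw [hroot]; nlinarith [mul_pos hpos (sub_pos.2 hd'r)]
      · rw [hroot]; nlinarith
    have con2 : ∀ r, d' ≤ r → r ≤ r0 → Good a b (s r) (t r) r := by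
      intro r h1 h2
      refine ⟨m, fun l => ?_⟩
      have lin : ∀ ω : ℤ, (ω = 1 ∨ ω = -1) → (ω : ℝ) * (s r * a l + t r * b l - 1 / 2 - m l) ≤ r := by
        intro ω hω
        have c1 := con l ω hω
        have c2 : (ω : ℝ) * (s r0 * a l + t r0 * b l - 1 / 2 - m l) ≤ r0 := by
          rw [hsr0, htr0]
          have := abs_le.1 (hm l)
          rcases hω with rfl | rfl <;> push_cast <;> linarith
        have is : (r0 - d') * s r = (r0 - r) * s d' + (r - d') * s r0 := by
          rw [hs]; field_simp; ring
        have it : (r0 - d') * t r = (r0 - r) * t d' + (r - d') * t r0 := by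
          rw [ht]; field_simp; ring
        have hpos : 0 < r0 - d' := by linarith
        refine le_of_mul_le_mul_left ?_ hpos
        have c3 := mul_le_mul_of_nonneg_left c1 (sub_nonneg.2 h2)
        have c4 := mul_le_mul_of_nonneg_left c2 (sub_nonneg.2 h1)
        calc (r0 - d') * ((ω : ℝ) * (s r * a l + t r * b l - 1 / 2 - m l))
            = (r0 - r) * ((ω : ℝ) * (s d' * a l + t d' * b l - 1 / 2 - m l))
              + (r - d') * ((ω : ℝ) * (s r0 * a l + t r0 * b l - 1 / 2 - m l)) := by
                linear_combination (ω * a l : ℝ) * is + ω * b l * it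
          _ ≤ _ := by linarith
      have l1 := lin 1 (Or.inl rfl)
      have l2 := lin (-1) (Or.inr rfl)
      push_cast at l1 l2
      rw [abs_le]; constructor <;> linarith
    have hdd : d' = d := le_antisymm hd'd (hd _ _ _ (con2 d' le_rfl hd'r.le))
    rw [hdd] at con2 hQd'
    obtain ⟨P, hP⟩ : ∃ P : ℤ, P = x * (A * e' - A' * e) - y * (e * B' - e' * B) := ⟨_, rfl⟩
    obtain ⟨R, hR⟩ : ∃ R : ℤ, R = x * (A - A') - y * (B' - B) := ⟨_, rfl⟩
    have phi : ∀ r, 2 * Δ * (x * t r - y * s r) = P + 2 * R * r := by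
      intro r; rw [hP, hR]; push_cast
      linear_combination (x : ℝ) * htaff r - y * hsaff r
    have phi0 : (P : ℝ) + 2 * R * r0 = 0 := by
      rw [← phi, hsr0, htr0, hs0, ht0]; ring
    obtain ⟨J, hJ⟩ : ∃ J : ℤ, J = Q * P + 2 * R * f := ⟨_, rfl⟩
    have hJr : (J : ℝ) = Q * (P + 2 * R * d) := by
      rw [hJ]; push_cast; rw [← hQd']; ring
    have hJR : (J : ℝ) = -(2 * Q * R * (r0 - d)) := by
      rw [hJr]; linear_combination (Q : ℝ) * phi0
    have hJphi : (J : ℝ) = 2 * Δ * Q * (x * t d - y * s d) := by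
      rw [hJr, ← phi]; ring
    have hJ0 : J ≠ 0 := by
      intro h
      rw [h] at hJphi
      have h2 : (x : ℝ) * t d - y * s d = 0 := by
        have h3 : (2 * Δ * Q : ℝ) ≠ 0 := by positivity
        have := hJphi.symm
        push_cast at this
        exact (mul_eq_zero.1 this).resolve_left h3
      have := hmin (s d) (t d) d 0 (by simpa using h2) (con2 d le_rfl hdr.le)
      linarith
    have hψ : |(x : ℝ) * t d - y * s d| < 1 := by
      by_contra hge
      push Not at hge
      obtain ⟨ψ, hψ⟩ : ∃ ψ : ℝ, ψ = x * t d - y * s d := ⟨_, rfl⟩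
      rw [← hψ] at hge
      have hψpos : 0 < |ψ| := by linarith
      have hψ0 : ψ ≠ 0 := abs_pos.1 hψpos
      obtain ⟨r, hr⟩ : ∃ r, r = r0 - (r0 - d) / |ψ| := ⟨_, rfl⟩
      have hq1 : 0 < (r0 - d) / |ψ| := div_pos (by linarith) hψpos
      have hq2 : (r0 - d) / |ψ| ≤ r0 - d := div_le_self (by linarith) hge
      have hval : (x : ℝ) * t r - y * s r = ψ / |ψ| := by
        have h1 := phi r
        have h2 := phi d
        rw [← hψ] at h2
        have h3 : (2 * Δ : ℝ) ≠ 0 := by positivity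
        apply mul_left_cancel₀ h3
        rw [h1, hr]
        have h4 : 2 * Δ * ψ = -(2 * R * (r0 - d)) := by linear_combination h2 + phi0
        have h5 : 2 * Δ * (ψ / |ψ|) = (2 * Δ * ψ) / |ψ| := by ring
        rw [h5, h4]
        linear_combination phi0
      obtain ⟨k, hk⟩ : ∃ k : ℤ, ψ / |ψ| = k := by
        rcases abs_choice ψ with h | h
        · exact ⟨1, by rw [h]; field_simp; simp⟩
        · exact ⟨-1, by rw [h]; field_simp; simp⟩
      have := hmin (s r) (t r) r k (by rw [hval, hk]) (con2 r (by linarith) (by linarith))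
      linarith
    have hJb : |J| ≤ ((4 * H ^ 2 * Q : ℕ) : ℤ) := by
      have h1 : |(J : ℝ)| ≤ 2 * |(Δ : ℝ)| * Q := by
        rw [hJphi, abs_mul, abs_mul, abs_mul]
        have : |(Q : ℝ)| = Q := abs_of_pos hQr
        rw [this, abs_two]
        have : 0 ≤ 2 * |(Δ : ℝ)| * Q := by positivity
        nlinarith
      have h2 : |J| ≤ 2 * |Δ| * Q := by exact_mod_cast h1
      push_cast
      have : (0 : ℤ) ≤ Q := by positivity
      nlinarith
    have hrd : 0 < r0 - d := by linarith
    have hJ0r : (J : ℝ) ≠ 0 := by exact_mod_cast hJ0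
    obtain ⟨z, hz⟩ := lat_of_root (4 * H ^ 2 * Q) J (-(2 * Q * R)) (1 / (r0 - d)) hJ0 hJb (by
      rw [hJR]; push_cast; field_simp)
    have hMpos : (0 : ℝ) < ((4 * H ^ 2 * Q).factorial : ℝ) := by
      exact_mod_cast Nat.factorial_pos _
    have hzpos : 0 < z := by
      have : (0 : ℝ) < z := by rw [← hz]; positivity
      exact_mod_cast this
    refine ⟨(z - 1).toNat, ?_⟩
    have h1 : (((z - 1).toNat : ℤ) : ℝ) = ((z - 1 : ℤ) : ℝ) := by
      rw [Int.toNat_of_nonneg (by omega)]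
    have h2 : (((z - 1).toNat : ℕ) : ℝ) + 1 = z := by
      have : (((z - 1).toNat : ℕ) : ℝ) = ((z - 1 : ℤ) : ℝ) := by exact_mod_cast h1
      rw [this]; push_cast; ring
    rw [h2, ← hz]
    field_simp

def halfPt (n : ℕ) : Torus n := fun _ => ((1 / 2 : ℝ) : AddCircle (1 : ℝ))

lemma iSup_eq_dist_s1 {n : ℕ} (hn : 2 ≤ n) (x : Torus n) :
    (⨆ i, dist (x i) ((1 / 2 : ℝ) : AddCircle (1 : ℝ))) = dist x (halfPt n) := by
  haveI : Nonempty (Fin n) := ⟨⟨0, by omega⟩⟩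
  apply le_antisymm
  · exact ciSup_le fun i => dist_le_pi_dist x (halfPt n) i
  · rw [dist_pi_le_iff (Real.iSup_nonneg fun i => dist_nonneg)]
    intro i
    exact le_ciSup (f := fun i => dist (x i) ((1 / 2 : ℝ) : AddCircle (1 : ℝ)))
      (Set.finite_range _).bddAbove i

lemma DVal_eq {n : ℕ} (hn : 2 ≤ n) (S : Set (Torus n)) :
    DVal S = sInf ((fun x => dist x (halfPt n)) '' S) := by
  unfold DVal
  congr 1
  exact Set.image_congr fun x _ => iSup_eq_dist_s1 hn x

lemma DVal_le {n : ℕ} (hn : 2 ≤ n) (S : Set (Torus n)) (p : Torus n) (hp : p ∈ S) :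
    DVal S ≤ dist p (halfPt n) := by
  rw [DVal_eq hn]
  exact csInf_le ⟨0, by rintro _ ⟨q, _, rfl⟩; exact dist_nonneg⟩ ⟨p, hp, rfl⟩

lemma dist_coe (x : ℝ) : dist (x : AddCircle (1 : ℝ)) ((1 / 2 : ℝ) : AddCircle (1 : ℝ))
    = |x - 1 / 2 - round (x - 1 / 2)| := by
  rw [dist_eq_norm, ← AddCircle.coe_sub]
  exact UnitAddCircle.norm_eq

/-- the point with parameters `s, t` -/
def pt {n : ℕ} (a b : Fin n → ℤ) (s t : ℝ) : Torus n :=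
  torusProj fun i => s * a i + t * b i

lemma good_of_dist {n : ℕ} (a b : Fin n → ℤ) (s t : ℝ) :
    Good a b s t (dist (pt a b s t) (halfPt n)) := by
  refine ⟨fun i => round (s * a i + t * b i - 1 / 2), fun i => ?_⟩
  rw [← dist_coe]
  exact dist_le_pi_dist (pt a b s t) (halfPt n) i

lemma dist_le_of_good {n : ℕ} (hn : 2 ≤ n) (a b : Fin n → ℤ) (s t r : ℝ) (h : Good a b s t r) :
    dist (pt a b s t) (halfPt n) ≤ r := by
  obtain ⟨m, hm⟩ := h
  have hr : 0 ≤ r := (abs_nonneg _).trans (hm ⟨0, by omega⟩)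
  rw [dist_pi_le_iff hr]
  intro i
  refine le_trans (le_of_eq (dist_coe (s * a i + t * b i))) ?_
  exact (round_le _ _).trans (hm i)

/-- the line with direction `x a + y b` -/
def lineT {n : ℕ} (a b : Fin n → ℤ) (x y : ℤ) : Set (Torus n) :=
  {p | ∃ τ : ℝ, p = pt a b (τ * x) (τ * y)}

lemma pt_add_int {n : ℕ} (a b : Fin n → ℤ) (s t : ℝ) (k l : ℤ) :
    pt a b (s + k) (t + l) = pt a b s t := by
  funext i
  simp only [pt, torusProj]
  have : (s + k) * (a i : ℝ) + (t + l) * b i = (s * a i + t * b i) + ((k * a i + l * b i : ℤ) : ℝ) := by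
    push_cast; ring
  rw [this, AddCircle.coe_add]
  have h : (((k * a i + l * b i : ℤ) : ℝ) : AddCircle (1 : ℝ)) = 0 := by
    rw [AddCircle.coe_eq_zero_iff]; exact ⟨k * a i + l * b i, by simp⟩
  rw [h, add_zero]

lemma mem_line {n : ℕ} (a b : Fin n → ℤ) (x y : ℤ) (hxy : IsCoprime x y) (s t : ℝ) (k : ℤ)
    (h : x * t - y * s = k) : pt a b s t ∈ lineT a b x y := by
  obtain ⟨u, v, huv⟩ := hxy
  have huvr : (u : ℝ) * x + v * y = 1 := by exact_mod_cast huv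
  refine ⟨u * s + v * t, ?_⟩
  rw [← pt_add_int a b ((u * s + v * t) * x) ((u * s + v * t) * y) (-(k * v)) (k * u)]
  congr 1
  · push_cast; rw [← h]; linear_combination (-s : ℝ) * huvr
  · push_cast; rw [← h]; linear_combination (-t : ℝ) * huvr

lemma pt_continuous {n : ℕ} (a b : Fin n → ℤ) : Continuous fun q : ℝ × ℝ => pt a b q.1 q.2 := by
  unfold pt torusProj
  refine continuous_pi fun i => ?_
  exact (AddCircle.continuous_mk' 1).comp (by fun_prop)

lemma line_min {n : ℕ} (hn : 2 ≤ n) (a b : Fin n → ℤ) (x y : ℤ) :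
    ∃ τ : ℝ, DVal (lineT a b x y) = dist (pt a b (τ * x) (τ * y)) (halfPt n) := by
  have hc : Continuous fun τ : ℝ => dist (pt a b (τ * x) (τ * y)) (halfPt n) :=
    ((pt_continuous a b).comp (f := fun τ : ℝ => (τ * x, τ * y)) (by fun_prop)).dist continuous_const
  obtain ⟨τ, _, hτ⟩ := isCompact_Icc.exists_isMinOn (s := Set.Icc (0 : ℝ) 1) ⟨0, by simp⟩ hc.continuousOn
  refine ⟨τ, le_antisymm (DVal_le hn _ _ ⟨τ, rfl⟩) ?_⟩
  rw [DVal_eq hn]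
  refine le_csInf ⟨_, _, ⟨0, rfl⟩, rfl⟩ ?_
  rintro _ ⟨_, ⟨ρ, rfl⟩, rfl⟩
  have h := hτ (show Int.fract ρ ∈ Set.Icc (0 : ℝ) 1 from ⟨Int.fract_nonneg _, (Int.fract_lt_one _).le⟩)
  have e : pt a b (Int.fract ρ * x) (Int.fract ρ * y) = pt a b (ρ * x) (ρ * y) := by
    rw [← pt_add_int a b (Int.fract ρ * x) (Int.fract ρ * y) (⌊ρ⌋ * x) (⌊ρ⌋ * y)]
    congr 1
    · push_cast; rw [← add_mul, Int.fract_add_floor]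
    · push_cast; rw [← add_mul, Int.fract_add_floor]
  simp only [Set.mem_setOf_eq] at h
  rw [e] at h
  exact h

lemma line_close {n : ℕ} (hn : 2 ≤ n) (a b : Fin n → ℤ) (s t c : ℝ)
    (h : dist (pt a b s t) (halfPt n) < c) :
    ∃ N : ℕ, ∀ x y : ℤ, IsCoprime x y → (N < |x| ∨ N < |y|) → DVal (lineT a b x y) < c := by
  have hc : Continuous fun q : ℝ × ℝ => dist (pt a b q.1 q.2) (halfPt n) :=
    (pt_continuous a b).dist continuous_const
  have hev : ∀ᶠ q in nhds ((s, t) : ℝ × ℝ), dist (pt a b q.1 q.2) (halfPt n) < c :=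
    hc.continuousAt.eventually_lt continuousAt_const h
  obtain ⟨ρ, hρ, hball⟩ := Metric.eventually_nhds_iff.1 hev
  obtain ⟨N, hN⟩ := exists_nat_gt (1 / ρ)
  refine ⟨N, fun x y hxy hbig => ?_⟩
  have hsmall : ∀ z : ℤ, (N : ℤ) < |z| → ∀ w : ℝ, |w| ≤ 1 / 2 → |w / z| < ρ := by
    intro z hz w hw
    have hz' : (N : ℝ) < |(z : ℝ)| := by exact_mod_cast hz
    have h1 : 1 / ρ < |(z : ℝ)| := hN.trans hz'
    have h2 : 0 < |(z : ℝ)| := lt_trans (by positivity) h1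
    rw [abs_div, div_lt_iff₀ h2]
    rw [div_lt_iff₀ hρ] at h1
    linarith
  obtain ⟨k, hk⟩ : ∃ k : ℤ, k = round (x * t - y * s : ℝ) := ⟨_, rfl⟩
  have hkr : |(x * t - y * s : ℝ) - k| ≤ 1 / 2 := by rw [hk]; exact abs_sub_round _
  rcases hbig with hx | hy
  · have hx0 : (x : ℝ) ≠ 0 := by
      have : x ≠ 0 := by rintro rfl; simp at hx; omega
      exact_mod_cast this
    have hm := mem_line a b x y hxy s (t - (x * t - y * s - k) / x) k (by field_simp; ring)
    refine lt_of_le_of_lt (DVal_le hn _ _ hm) ?_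
    apply hball (y := (s, t - (x * t - y * s - k) / x))
    rw [Prod.dist_eq, dist_self, Real.dist_eq]
    have := hsmall x hx _ hkr
    refine max_lt hρ ?_
    rwa [sub_sub_cancel_left, abs_neg]
  · have hy0 : (y : ℝ) ≠ 0 := by
      have : y ≠ 0 := by rintro rfl; simp at hy; omega
      exact_mod_cast this
    have hm := mem_line a b x y hxy (s + (x * t - y * s - k) / y) t k (by field_simp; ring)
    refine lt_of_le_of_lt (DVal_le hn _ _ hm) ?_
    apply hball (y := (s + (x * t - y * s - k) / y, t))
    rw [Prod.dist_eq, dist_self, Real.dist_eq]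
    have := hsmall y hy _ hkr
    refine max_lt ?_ hρ
    rwa [add_sub_cancel_left]

lemma span2_eq {n : ℕ} (v : Fin 2 → Fin n → ℤ) :
    spanTorus v = {p | ∃ s t : ℝ, p = pt (v 0) (v 1) s t} := by
  ext p
  simp only [spanTorus, Set.mem_setOf_eq, Fin.sum_univ_two, pt]
  constructor
  · rintro ⟨t, rfl⟩; exact ⟨t 0, t 1, rfl⟩
  · rintro ⟨s, t, rfl⟩; exact ⟨![s, t], by simp⟩

lemma minor_ne {n : ℕ} (v : Fin 2 → Fin n → ℤ)
    (hv : LinearIndependent ℝ (fun j : Fin 2 => fun i : Fin n => (v j i : ℝ))) :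
    ∃ i j, v 0 i * v 1 j - v 0 j * v 1 i ≠ 0 := by
  by_contra hcon
  push Not at hcon
  have hz : ∀ j, v 1 j = 0 ∧ v 0 j = 0 := by
    intro j
    have h := Fintype.linearIndependent_iff.1 hv ![(v 1 j : ℝ), -(v 0 j : ℝ)] (by
      funext i
      simp only [Fin.sum_univ_two, Pi.add_apply, Pi.smul_apply, smul_eq_mul, Matrix.cons_val_zero,
        Matrix.cons_val_one, Pi.zero_apply]
      have : ((v 0 i * v 1 j - v 0 j * v 1 i : ℤ) : ℝ) = 0 := by rw [hcon]; simp
      push_cast at this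
      linarith)
    have h0 := h 0
    have h1 := h 1
    simp at h0 h1
    exact ⟨h0, h1⟩
  apply hv.ne_zero 0
  funext i
  simp [(hz i).2]

lemma subtorus_line {n : ℕ} (v : Fin 2 → Fin n → ℤ)
    (hv : LinearIndependent ℝ (fun j : Fin 2 => fun i : Fin n => (v j i : ℝ)))
    (T : Set (Torus n)) (hT : IsSubtorus 1 T) (hTU : T ⊆ spanTorus v) :
    ∃ x y : ℤ, IsCoprime x y ∧ T = lineT (v 0) (v 1) x y := by
  obtain ⟨w, hw, rfl⟩ := hT
  have hw0 : w 0 ≠ 0 := by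
    intro h
    apply hw.ne_zero 0
    funext i
    simp [h]
  obtain ⟨α, β, hαβ⟩ : ∃ α β : ℝ, ∀ i, (w 0 i : ℝ) = α * v 0 i + β * v 1 i := by
    have h1 : ∀ τ : ℝ, ∃ m : Fin n → ℤ, ∃ s t : ℝ, ∀ i, τ * w 0 i - m i = s * v 0 i + t * v 1 i := by
      intro τ
      have : (torusProj fun i => τ * (w 0 i : ℝ)) ∈ spanTorus v :=
        hTU ⟨fun _ => τ, by simp⟩
      rw [span2_eq] at this
      obtain ⟨s, t, hst⟩ := this
      have h2 : ∀ i, ∃ m : ℤ, τ * w 0 i - m = s * v 0 i + t * v 1 i := by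
        intro i
        have h3 := congrFun hst i
        simp only [pt, torusProj] at h3
        have h4 : ((τ * w 0 i - (s * v 0 i + t * v 1 i) : ℝ) : AddCircle (1 : ℝ)) = 0 := by
          rw [AddCircle.coe_sub, h3, sub_self]
        rw [AddCircle.coe_eq_zero_iff] at h4
        obtain ⟨m, hm⟩ := h4
        refine ⟨m, ?_⟩
        simp at hm
        linarith
      choose m hm using h2
      exact ⟨m, s, t, hm⟩
    choose m s t h using h1
    have hinj := not_injective_uncountable_countable m
    rw [Function.Injective] at hinj
    push Not at hinj
    obtain ⟨τ, τ', he, hne⟩ := hinj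
    have hne' : τ - τ' ≠ 0 := sub_ne_zero.2 hne
    refine ⟨(s τ - s τ') / (τ - τ'), (t τ - t τ') / (τ - τ'), fun i => ?_⟩
    have e1 := h τ i
    have e2 := h τ' i
    rw [← he] at e2
    field_simp
    linarith
  obtain ⟨i, j, hδ⟩ := minor_ne v hv
  obtain ⟨δ, hδe⟩ : ∃ δ, δ = v 0 i * v 1 j - v 0 j * v 1 i := ⟨_, rfl⟩
  rw [← hδe] at hδ
  have hδr : (δ : ℝ) ≠ 0 := by exact_mod_cast hδ
  have hδc : (δ : ℝ) = v 0 i * v 1 j - v 0 j * v 1 i := by rw [hδe]; push_cast; ring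
  obtain ⟨X, hX⟩ : ∃ X, X = w 0 i * v 1 j - w 0 j * v 1 i := ⟨_, rfl⟩
  obtain ⟨Y, hY⟩ : ∃ Y, Y = v 0 i * w 0 j - v 0 j * w 0 i := ⟨_, rfl⟩
  have hXα : (X : ℝ) = δ * α := by
    rw [hX, hδc]; push_cast; rw [hαβ i, hαβ j]; ring
  have hYβ : (Y : ℝ) = δ * β := by
    rw [hY, hδc]; push_cast; rw [hαβ i, hαβ j]; ring
  have hgcd : 0 < X.gcd Y := by
    rw [Int.gcd_pos_iff]
    by_contra hcon
    push Not at hcon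
    apply hw0
    funext l
    have h1 : α = 0 := by
      have := hXα; rw [hcon.1] at this; simpa [hδr] using this.symm
    have h2 : β = 0 := by
      have := hYβ; rw [hcon.2] at this; simpa [hδr] using this.symm
    have := hαβ l
    rw [h1, h2] at this
    simp at this
    simpa using this
  obtain ⟨g, x, y, hg, hxy, hXx, hYy⟩ := Int.exists_gcd_one' hgcd
  have hgr : (g : ℝ) ≠ 0 := by positivity
  refine ⟨x, y, Int.isCoprime_iff_gcd_eq_one.2 hxy, ?_⟩
  have hα : α = g / δ * x := by
    rw [hXx] at hXα; push_cast at hXα; field_simp; linarith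
  have hβ : β = g / δ * y := by
    rw [hYy] at hYβ; push_cast at hYβ; field_simp; linarith
  ext p
  simp only [spanTorus, lineT, pt, Set.mem_setOf_eq, Fin.sum_univ_one]
  constructor
  · rintro ⟨t, rfl⟩
    refine ⟨t 0 * (g / δ), ?_⟩
    congr 1
    funext l
    rw [hαβ l, hα, hβ]; ring
  · rintro ⟨τ, rfl⟩
    refine ⟨fun _ => τ * (δ / g), ?_⟩
    congr 1
    funext l
    rw [hαβ l, hα, hβ]; field_simp

lemma line_proper {n : ℕ} (a b : Fin n → ℤ) (x y : ℤ) (h : IsProperSub (lineT a b x y)) (i : Fin n) :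
    x * a i + y * b i ≠ 0 := by
  intro h0
  apply h
  rintro _ ⟨τ, rfl⟩
  rw [Set.mem_iUnion]
  refine ⟨i, ?_⟩
  have h0r : (x : ℝ) * a i + y * b i = 0 := by exact_mod_cast h0
  have : τ * x * a i + τ * y * b i = 0 := by linear_combination τ * h0r
  simp [pt, torusProj, this]

/-- Only finitely many 1-dimensional proper subtori `T ⊆ U` have `D(T)` outside
`{D(U)} ∪ ⋃ᵢ (D(U) + 1/Prog(αᵢ, βᵢ))`. -/
theorem stmt1 (n : ℕ) (hn : 2 ≤ n) (U : Set (Torus n))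
    (hU : IsSubtorus 2 U) (hUproper : IsProperSub U) :
    ∃ (N : ℕ) (α β : Fin N → ℚ),
      (∀ i, 0 < α i) ∧ (∀ i, 0 < β i) ∧
      {T : Set (Torus n) | IsSubtorus 1 T ∧ IsProperSub T ∧ T ⊆ U ∧
        DVal T ∉ ({DVal U} ∪ ⋃ i : Fin N, progSet (DVal U) (α i) (β i))}.Finite := by
  obtain ⟨v, hv, rfl⟩ := hU
  obtain ⟨H, hH1, hH⟩ : ∃ H : ℕ, 1 ≤ H ∧ ∀ j i, |v j i| ≤ H := by
    refine ⟨1 + ∑ j, ∑ i, (v j i).natAbs, by omega, fun j i => ?_⟩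
    have h1 : (v j i).natAbs ≤ ∑ i, (v j i).natAbs :=
      Finset.single_le_sum (f := fun i => (v j i).natAbs) (fun _ _ => Nat.zero_le _) (Finset.mem_univ i)
    have h2 : ∑ i, (v j i).natAbs ≤ ∑ j, ∑ i, (v j i).natAbs :=
      Finset.single_le_sum (f := fun j => ∑ i, (v j i).natAbs) (fun _ _ => Nat.zero_le _) (Finset.mem_univ j)
    rw [Int.abs_eq_natAbs]
    exact_mod_cast (h1.trans h2).trans (by omega)
  obtain ⟨d, hd⟩ : ∃ d, d = DVal (spanTorus v) := ⟨_, rfl⟩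
  rw [← hd]
  have hdle : ∀ s t r, Good (v 0) (v 1) s t r → d ≤ r := by
    intro s t r h
    rw [hd]
    refine (DVal_le hn _ (pt (v 0) (v 1) s t) ?_).trans (dist_le_of_good hn _ _ _ _ _ h)
    rw [span2_eq]; exact ⟨s, t, rfl⟩
  obtain ⟨Q, M, hQ, hM, hcore⟩ := core (v 0) (v 1) H hH1 (hH 0) (hH 1) d hdle
  have hQr : (0 : ℝ) < Q := by exact_mod_cast hQ
  have hMr : (0 : ℝ) < M := by exact_mod_cast hM
  have hMq : (0 : ℚ) < 1 / (M : ℚ) := by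
    have : (0 : ℚ) < M := by exact_mod_cast hM
    positivity
  have hlt : d < (⌊(Q : ℝ) * d⌋ + 1) / Q := by
    rw [lt_div_iff₀ hQr, mul_comm]; exact Int.lt_floor_add_one _
  obtain ⟨s, t, hst⟩ : ∃ s t, dist (pt (v 0) (v 1) s t) (halfPt n) < (⌊(Q : ℝ) * d⌋ + 1) / Q := by
    have h1 := hlt
    nth_rewrite 1 [hd] at h1
    rw [DVal_eq hn, span2_eq] at h1
    have hne : {p | ∃ s t : ℝ, p = pt (v 0) (v 1) s t}.Nonempty :=
      ⟨pt (v 0) (v 1) 0 0, 0, 0, rfl⟩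
    obtain ⟨_, ⟨_, ⟨s, t, rfl⟩, rfl⟩, h⟩ := exists_lt_of_csInf_lt (hne.image _) h1
    exact ⟨s, t, h⟩
  obtain ⟨N, hN⟩ := line_close hn _ _ _ _ _ hst
  refine ⟨1, fun _ => 1 / (M : ℚ), fun _ => 1 / (M : ℚ), fun _ => hMq, fun _ => hMq, ?_⟩
  refine Set.Finite.subset (((Set.finite_Icc (-(N : ℤ)) N).prod (Set.finite_Icc (-(N : ℤ)) N)).image
    (fun q : ℤ × ℤ => lineT (v 0) (v 1) q.1 q.2)) ?_
  rintro T ⟨hT1, hTp, hTU, hTD⟩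
  obtain ⟨x, y, hxy, rfl⟩ := subtorus_line v hv T hT1 hTU
  by_cases hbig : (N : ℤ) < |x| ∨ (N : ℤ) < |y|
  · exfalso
    apply hTD
    have hclose := hN x y hxy hbig
    obtain ⟨τ, hτ⟩ := line_min hn (v 0) (v 1) x y
    obtain ⟨r0, hr0⟩ : ∃ r0, r0 = DVal (lineT (v 0) (v 1) x y) := ⟨_, rfl⟩
    rw [← hr0] at hclose hτ ⊢
    have hg : Good (v 0) (v 1) (τ * x) (τ * y) r0 := by rw [hτ]; exact good_of_dist _ _ _ _
    rcases (hdle _ _ _ hg).eq_or_lt with h | h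
    · left; exact h.symm
    · right
      obtain ⟨k, hk⟩ := hcore x y (line_proper _ _ _ _ hTp) τ r0 hg (by
        intro s t r k hk hgood
        rw [hr0]
        exact (DVal_le hn _ _ (mem_line _ _ x y hxy s t k hk)).trans
          (dist_le_of_good hn _ _ _ _ _ hgood)) h (by
        rw [lt_div_iff₀ hQr, mul_comm] at hclose; exact hclose)
      rw [Set.mem_iUnion]
      refine ⟨0, k, ?_⟩
      have hpos : 0 < r0 - d := by linarith
      push_cast
      have e : (1 : ℝ) / M * k + 1 / M = 1 / (r0 - d) := by rw [hk]; ring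
      rw [e, one_div_one_div]; ring
  · push Not at hbig
    exact ⟨(x, y), ⟨abs_le.1 hbig.1, abs_le.1 hbig.2⟩, rfl⟩
end
end
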